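/- arXiv:2403.02964 — 2 statements merged into one kernel-verified Lean document; each statement's English description precedes it below -/
import Mathlib

section
/- Let γ ∈ (0,1], t₁ > 0, M ≥ 0, and let w : [0, t₁] → ℂ be continuously differentiable with w(0) = 0, w'(0) = 1, and |w'(t) − w'(s)| ≤ M|t − s|^γ for all s, t ∈ [0, t₁]. Then there exist r₁ > 0, a constant C > 0, and a strictly increasing continuous bijection τ : [0, r₁] → [0, τ(r₁)] with τ(r₁) ≤ t₁, continuously differentiable on (0, r₁), such that the reparametrization w₊ := w ∘ τ satisfies: |w₊(r)| = r for all r ∈ [0, r₁]; |Arg w₊(r)| ≤ C r^γ for all r ∈ (0, r₁]; and |w₊'(r) − 1| ≤ C r^γ for all r ∈ (0, r₁], where Arg denotes the principal argument. -/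
open Set

/-- A `C^{1,γ}` curve `w` ending at `0` with `w'(0) = 1` can be
reparametrized by its distance to the origin: there exist `r₁ > 0`, `C > 0` and a
strictly increasing continuous bijection `τ : [0, r₁] → [0, τ r₁]`, continuously
differentiable on `(0, r₁)`, with `τ r₁ ≤ t₁`, such that `w₊ := w ∘ τ` satisfies
`|w₊ r| = r` on `[0, r₁]`, `|Arg (w₊ r)| ≤ C r^γ` and `|w₊' r - 1| ≤ C r^γ` on `(0, r₁]`. -/
theorem stmt_2 (γ t₁ M : ℝ) (hγ0 : 0 < γ) (hγ1 : γ ≤ 1) (ht₁ : 0 < t₁) (hM : 0 ≤ M)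
    (w w' : ℝ → ℂ)
    (hwd : ∀ t ∈ Icc (0:ℝ) t₁, HasDerivWithinAt w (w' t) (Icc 0 t₁) t)
    (hw'c : ContinuousOn w' (Icc 0 t₁))
    (hw0 : w 0 = 0) (hw'0 : w' 0 = 1)
    (hwH : ∀ s ∈ Icc (0:ℝ) t₁, ∀ t ∈ Icc (0:ℝ) t₁, ‖w' t - w' s‖ ≤ M * |t - s| ^ γ) :
    ∃ r₁ > (0:ℝ), ∃ C > (0:ℝ), ∃ τ τ' : ℝ → ℝ,
      τ r₁ ≤ t₁ ∧
      StrictMonoOn τ (Icc 0 r₁) ∧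
      ContinuousOn τ (Icc 0 r₁) ∧
      BijOn τ (Icc 0 r₁) (Icc 0 (τ r₁)) ∧
      (∀ r ∈ Ioo (0:ℝ) r₁, HasDerivAt τ (τ' r) r) ∧
      ContinuousOn τ' (Ioo 0 r₁) ∧
      (∀ r ∈ Icc (0:ℝ) r₁, ‖w (τ r)‖ = r) ∧
      (∀ r ∈ Ioc (0:ℝ) r₁, |Complex.arg (w (τ r))| ≤ C * r ^ γ) ∧
      (∀ r ∈ Ioc (0:ℝ) r₁, ∃ d : ℂ,
        HasDerivWithinAt (w ∘ τ) d (Icc 0 r₁) r ∧ ‖d - 1‖ ≤ C * r ^ γ) := by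
  -- choice of t0
  obtain ⟨t0, ht0, ht01, hMt0⟩ : ∃ t0 > (0:ℝ), t0 < t₁ ∧ M * t0 ^ γ ≤ 1/10 := by
    have hc : Filter.Tendsto (fun t : ℝ => M * t ^ γ) (nhdsWithin 0 (Ioi 0)) (nhds 0) := by
      have h1 : ContinuousAt (fun t : ℝ => M * t ^ γ) 0 :=
        (Real.continuousAt_rpow_const 0 γ (Or.inr hγ0.le)).const_mul M
      have h2 := h1.tendsto
      simp only [Real.zero_rpow hγ0.ne', mul_zero] at h2
      exact h2.mono_left nhdsWithin_le_nhds
    have h1 := hc.eventually (gt_mem_nhds (show (0:ℝ) < 1/10 by norm_num))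
    have h2 : ∀ᶠ t in nhdsWithin (0:ℝ) (Ioi 0), t ∈ Ioo 0 t₁ := Ioo_mem_nhdsGT ht₁
    obtain ⟨t, ha, hb⟩ := (h1.and h2).exists
    exact ⟨t, hb.1, hb.2, ha.le⟩
  have heps : ∀ t ∈ Icc (0:ℝ) t0, 0 ≤ M * t ^ γ ∧ M * t ^ γ ≤ 1/10 := by
    intro t ht
    refine ⟨mul_nonneg hM (Real.rpow_nonneg ht.1 _), le_trans ?_ hMt0⟩
    exact mul_le_mul_of_nonneg_left (Real.rpow_le_rpow ht.1 ht.2 hγ0.le) hM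
  have hw1 : ∀ t ∈ Icc (0:ℝ) t0, ‖w' t - 1‖ ≤ M * t ^ γ := by
    intro t ht
    have := hwH 0 ⟨le_rfl, ht₁.le⟩ t ⟨ht.1, ht.2.trans ht01.le⟩
    rwa [hw'0, sub_zero, abs_of_nonneg ht.1] at this
  have hw2 : ∀ t ∈ Icc (0:ℝ) t0, ‖w t - t‖ ≤ M * t ^ γ * t := by
    intro t ht
    have hsub : Icc 0 t ⊆ Icc 0 t₁ := Icc_subset_Icc_right (ht.2.trans ht01.le)
    have h := (convex_Icc (0:ℝ) t).norm_image_sub_le_of_norm_hasDerivWithin_le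
      (f := fun s => w s - (s:ℂ)) (f' := fun s => w' s - 1) (C := M * t ^ γ) (x := 0) (y := t)
      (fun s hs => ((hwd s (hsub hs)).mono hsub).sub
        ((Complex.ofRealCLM.hasDerivAt (x := s)).hasDerivWithinAt))
      (fun s hs => (hw1 s ⟨hs.1, hs.2.trans ht.2⟩).trans
        (mul_le_mul_of_nonneg_left (Real.rpow_le_rpow hs.1 hs.2 hγ0.le) hM))
      ⟨le_rfl, ht.1⟩ ⟨ht.1, le_rfl⟩
    simpa [hw0, abs_of_nonneg ht.1] using h
  have hn1 : ∀ t ∈ Icc (0:ℝ) t0, |‖w t‖ - t| ≤ M * t ^ γ * t := by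
    intro t ht
    have h := abs_norm_sub_norm_le (w t) (t:ℂ)
    rw [Complex.norm_of_nonneg ht.1] at h
    exact h.trans (hw2 t ht)
  have hn2 : ∀ t ∈ Icc (0:ℝ) t0, 9/10 * t ≤ ‖w t‖ := by
    intro t ht
    have h := (abs_le.1 (hn1 t ht)).1
    nlinarith [heps t ht, ht.1]
  have hpos : ∀ t ∈ Ioc (0:ℝ) t0, 0 < ‖w t‖ := by
    intro t ht
    have := hn2 t ⟨ht.1.le, ht.2⟩
    linarith [ht.1]
  have hwD : ∀ t ∈ Ioc (0:ℝ) t0, HasDerivAt w (w' t) t := fun t ht =>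
    (hwd t ⟨ht.1.le, ht.2.trans ht01.le⟩).hasDerivAt (Icc_mem_nhds ht.1 (ht.2.trans_lt ht01))
  set ρd : ℝ → ℝ := fun t => inner ℝ (w t) (w' t) / ‖w t‖ with hρd
  have hρD : ∀ t ∈ Ioc (0:ℝ) t0, HasDerivAt (fun t => ‖w t‖) (ρd t) t := by
    intro t ht
    have h1 := (hwD t ht).norm_sq.sqrt (by have := hpos t ht; positivity)
    simp only [Real.sqrt_sq (norm_nonneg _)] at h1
    convert h1 using 1
    simp only [hρd]
    rw [mul_div_mul_left _ _ two_ne_zero]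
  have hρb : ∀ t ∈ Ioc (0:ℝ) t0, |ρd t - 1| ≤ 4 * (M * t ^ γ) := by
    intro t ht
    have ht' : t ∈ Icc 0 t0 := ⟨ht.1.le, ht.2⟩
    have hp := hpos t ht
    have e : ρd t - 1 = (inner ℝ (w t) (w' t - 1) + (((w t) - t).re + (t - ‖w t‖))) / ‖w t‖ := by
      have : (inner ℝ (w t) (1:ℂ) : ℝ) = (w t).re := by simp [Complex.inner]
      simp only [hρd]
      rw [inner_sub_right, this, Complex.sub_re, Complex.ofReal_re]
      field_simp
      ring
    rw [e, abs_div, abs_of_pos hp, div_le_iff₀ hp]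
    have a1 : |inner ℝ (w t) (w' t - 1)| ≤ ‖w t‖ * (M * t ^ γ) :=
      (abs_real_inner_le_norm _ _).trans (mul_le_mul_of_nonneg_left (hw1 t ht') hp.le)
    have a2 := (Complex.abs_re_le_norm (w t - t)).trans (hw2 t ht')
    have a3 := hn1 t ht'
    rw [abs_sub_comm] at a3
    have a4 := abs_add_le (inner ℝ (w t) (w' t - 1)) (((w t) - t).re + (t - ‖w t‖))
    have a5 := abs_add_le ((w t) - t).re (t - ‖w t‖)
    have a6 := hn2 t ht'
    have a7 := mul_le_mul_of_nonneg_left a6 (heps t ht').1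
    nlinarith [mul_nonneg (heps t ht').1 hp.le]
  have hρlow : ∀ t ∈ Ioc (0:ℝ) t0, 1/2 ≤ ρd t := by
    intro t ht
    have := (abs_le.1 (hρb t ht)).1
    linarith [(heps t ⟨ht.1.le, ht.2⟩).2]
  have hwc : ContinuousOn w (Icc 0 t0) := fun t ht =>
    ((hwd t ⟨ht.1, ht.2.trans ht01.le⟩).continuousWithinAt).mono (Icc_subset_Icc_right ht01.le)
  have hρc : ContinuousOn (fun t => ‖w t‖) (Icc 0 t0) := hwc.norm
  have hexp : ∀ s ∈ Icc (0:ℝ) t0, ∀ t ∈ Icc (0:ℝ) t0, s ≤ t → 1/2 * (t - s) ≤ ‖w t‖ - ‖w s‖ := by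
    apply (convex_Icc (0:ℝ) t0).mul_sub_le_image_sub_of_le_deriv hρc
    · rw [interior_Icc]
      exact fun t ht => (hρD t ⟨ht.1, ht.2.le⟩).differentiableAt.differentiableWithinAt
    · rw [interior_Icc]
      intro t ht
      rw [(hρD t ⟨ht.1, ht.2.le⟩).deriv]
      exact hρlow t ⟨ht.1, ht.2.le⟩
  have hsurj : SurjOn (fun t => ‖w t‖) (Icc 0 t0) (Icc 0 ‖w t0‖) := by
    have := intermediate_value_Icc ht0.le hρc
    simpa [SurjOn, hw0] using this
  set τ : ℝ → ℝ := Function.invFunOn (fun t => ‖w t‖) (Icc 0 t0) with hτ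
  have hτm : ∀ r ∈ Icc 0 ‖w t0‖, τ r ∈ Icc 0 t0 := fun r hr => Function.invFunOn_mem (hsurj hr)
  have hτe : ∀ r ∈ Icc 0 ‖w t0‖, ‖w (τ r)‖ = r := fun r hr => Function.invFunOn_eq (hsurj hr)
  have hmono : StrictMonoOn (fun t => ‖w t‖) (Icc 0 t0) := by
    intro s hs t ht hst
    have := hexp s hs t ht hst.le
    show ‖w s‖ < ‖w t‖
    linarith
  have hleft : ∀ t ∈ Icc 0 t0, τ ‖w t‖ = t := by
    intro t ht
    have hm : ‖w t‖ ∈ Icc 0 ‖w t0‖ :=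
      ⟨norm_nonneg _, hmono.monotoneOn ht ⟨ht0.le, le_rfl⟩ ht.2⟩
    exact hmono.injOn (hτm _ hm) ht (hτe _ hm)
  have hτmono : StrictMonoOn τ (Icc 0 ‖w t0‖) := by
    intro a ha b hb hab
    have h : ‖w (τ a)‖ < ‖w (τ b)‖ := by rwa [hτe a ha, hτe b hb]
    exact (hmono.lt_iff_lt (hτm a ha) (hτm b hb)).1 h
  have hτlip : LipschitzOnWith 2 τ (Icc 0 ‖w t0‖) := by
    apply LipschitzOnWith.of_dist_le_mul
    intro a ha b hb
    rw [Real.dist_eq, Real.dist_eq]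
    rcases le_total a b with hab | hab
    · have h := hexp _ (hτm a ha) _ (hτm b hb) (hτmono.monotoneOn ha hb hab)
      rw [hτe a ha, hτe b hb] at h
      rw [abs_sub_comm, abs_of_nonneg (sub_nonneg.2 (hτmono.monotoneOn ha hb hab)), abs_sub_comm,
        abs_of_nonneg (sub_nonneg.2 hab)]
      push_cast
      linarith
    · have h := hexp _ (hτm b hb) _ (hτm a ha) (hτmono.monotoneOn hb ha hab)
      rw [hτe a ha, hτe b hb] at h
      rw [abs_of_nonneg (sub_nonneg.2 (hτmono.monotoneOn hb ha hab)),
        abs_of_nonneg (sub_nonneg.2 hab)]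
      push_cast
      linarith
  have hτc := hτlip.continuousOn
  have hh : t0/2 ∈ Icc 0 t0 := ⟨by linarith, by linarith⟩
  have hr1 : 0 < ‖w (t0/2)‖ := hpos _ ⟨by linarith, by linarith⟩
  have hr2 : ‖w (t0/2)‖ < ‖w t0‖ := hmono hh ⟨ht0.le, le_rfl⟩ (by linarith)
  have hsub : Icc 0 ‖w (t0/2)‖ ⊆ Icc 0 ‖w t0‖ := Icc_subset_Icc_right hr2.le
  have hτ0 : τ 0 = 0 := by
    have := hleft 0 ⟨le_rfl, ht0.le⟩
    rwa [hw0, norm_zero] at this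
  have hτpos : ∀ r ∈ Ioc 0 ‖w (t0/2)‖, τ r ∈ Ioc 0 t0 := by
    intro r hr
    have hr' := hsub ⟨hr.1.le, hr.2⟩
    refine ⟨?_, (hτm r hr').2⟩
    rw [← hτ0]
    exact hτmono ⟨le_rfl, norm_nonneg _⟩ hr' hr.1
  have hτD : ∀ r ∈ Ioc 0 ‖w (t0/2)‖, HasDerivAt τ (ρd (τ r))⁻¹ r := by
    intro r hr
    have hnb : Icc 0 ‖w t0‖ ∈ nhds r := Icc_mem_nhds hr.1 (hr.2.trans_lt hr2)
    refine HasDerivAt.of_local_left_inverse (hτc.continuousAt hnb) (hρD _ (hτpos r hr)) ?_ ?_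
    · have := hρlow _ (hτpos r hr)
      linarith
    · filter_upwards [hnb] with y hy using hτe y hy
  have hτr : ∀ r ∈ Ioc 0 ‖w (t0/2)‖, M * τ r ^ γ ≤ 2 * (M * r ^ γ) := by
    intro r hr
    have hr' := hsub ⟨hr.1.le, hr.2⟩
    have h1 := hn2 _ (hτm r hr')
    rw [hτe r hr'] at h1
    have h2 : τ r ≤ 2 * r := by linarith [hr.1]
    have h3 : τ r ^ γ ≤ (2 * r) ^ γ := Real.rpow_le_rpow (hτm r hr').1 h2 hγ0.le
    rw [Real.mul_rpow (by norm_num) hr.1.le] at h3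
    have h4 : (2:ℝ) ^ γ ≤ 2 := by
      simpa using Real.rpow_le_rpow_of_exponent_le (by norm_num : (1:ℝ) ≤ 2) hγ1
    have h5 : τ r ^ γ ≤ 2 * r ^ γ :=
      h3.trans (mul_le_mul_of_nonneg_right h4 (Real.rpow_nonneg hr.1.le _))
    nlinarith
  refine ⟨‖w (t0/2)‖, hr1, 20 * M + 1, by linarith, τ, fun r => (ρd (τ r))⁻¹, ?_,
    hτmono.mono hsub, hτc.mono hsub, ?_, fun r hr => hτD r ⟨hr.1, hr.2.le⟩, ?_,
    fun r hr => hτe r (hsub hr), ?_, ?_⟩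
  · rw [hleft _ hh]; linarith
  · refine ⟨?_, (hτmono.mono hsub).injOn, ?_⟩
    · intro r hr
      exact ⟨(hτm r (hsub hr)).1,
        hτmono.monotoneOn (hsub hr) (hsub ⟨hr1.le, le_rfl⟩) hr.2⟩
    · have := intermediate_value_Icc hr1.le (hτc.mono hsub)
      rwa [hτ0] at this
  · have hτc' : ContinuousOn τ (Ioo 0 ‖w (t0/2)‖) :=
      (hτc.mono hsub).mono Ioo_subset_Icc_self
    have hmaps : MapsTo τ (Ioo 0 ‖w (t0/2)‖) (Ioc 0 t0) := fun r hr => hτpos r ⟨hr.1, hr.2.le⟩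
    have hρdc : ContinuousOn ρd (Ioc 0 t0) := by
      have c1 : ContinuousOn w (Ioc 0 t0) := hwc.mono Ioc_subset_Icc_self
      have c2 : ContinuousOn w' (Ioc 0 t0) :=
        hw'c.mono (fun t ht => ⟨ht.1.le, ht.2.trans ht01.le⟩)
      exact (ContinuousOn.inner (𝕜 := ℝ) c1 c2).div c1.norm (fun t ht => (hpos t ht).ne')
    refine (hρdc.comp hτc' hmaps).inv₀ ?_
    intro r hr
    have := hρlow _ (hmaps hr)
    show ρd (τ r) ≠ 0
    linarith
  · intro r hr
    have hr' := hsub ⟨hr.1.le, hr.2⟩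
    have ht := hτpos r hr
    have hm := hτm r hr'
    have hp := hpos _ ht
    have b2 := hw2 _ hm
    have hre : 0 ≤ (w (τ r)).re := by
      have h := (abs_le.1 ((Complex.abs_re_le_norm _).trans b2)).1
      rw [Complex.sub_re, Complex.ofReal_re] at h
      nlinarith [heps _ hm, hm.1]
    have him : |(w (τ r)).im| ≤ M * τ r ^ γ * τ r := by
      have h := (Complex.abs_im_le_norm _).trans b2
      rwa [Complex.sub_im, Complex.ofReal_im, sub_zero] at h
    have h1 := Real.mul_abs_le_abs_sin (Complex.abs_arg_le_pi_div_two_iff.2 hre)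
    rw [Complex.sin_arg, abs_div, abs_of_pos hp] at h1
    have h2 : |(w (τ r)).im| / ‖w (τ r)‖ ≤ 2 * (M * τ r ^ γ) := by
      rw [div_le_iff₀ hp]
      nlinarith [mul_le_mul_of_nonneg_left (hn2 _ hm) (heps _ hm).1,
        mul_nonneg (heps _ hm).1 hm.1]
    have h3 : (1/2 : ℝ) ≤ 2 / Real.pi := by
      rw [le_div_iff₀ Real.pi_pos]
      linarith [Real.pi_le_four]
    have h4 := mul_le_mul_of_nonneg_right h3 (abs_nonneg (w (τ r)).arg)
    have h5 := hτr r hr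
    have h6 : 0 ≤ r ^ γ := Real.rpow_nonneg hr.1.le _
    nlinarith [mul_nonneg hM h6]
  · intro r hr
    have ht := hτpos r hr
    have hm : τ r ∈ Icc 0 t0 := ⟨ht.1.le, ht.2⟩
    have hd := ((hwD _ ht).scomp r (hτD r hr)).hasDerivWithinAt (s := Icc 0 ‖w (t0/2)‖)
    refine ⟨_, hd, ?_⟩
    have hl := hρlow _ ht
    have hp : 0 < ρd (τ r) := by linarith
    have e : (ρd (τ r))⁻¹ • w' (τ r) - 1
        = (ρd (τ r))⁻¹ • ((w' (τ r) - 1) - ((ρd (τ r) - 1 : ℝ) : ℂ)) := by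
      have : ((ρd (τ r) : ℝ) : ℂ) ≠ 0 := by exact_mod_cast hp.ne'
      simp only [Complex.real_smul]
      push_cast
      field_simp
      ring
    rw [e, norm_smul, Real.norm_eq_abs, abs_of_pos (inv_pos.2 hp), inv_mul_le_iff₀ hp]
    have h1 := norm_sub_le (w' (τ r) - 1) ((ρd (τ r) - 1 : ℝ) : ℂ)
    rw [Complex.norm_real, Real.norm_eq_abs] at h1
    have h2 := hw1 _ hm
    have h3 := hρb _ ht
    have h5 := hτr r hr
    have h6 : 0 ≤ r ^ γ := Real.rpow_nonneg hr.1.le _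
    have h7 := mul_nonneg hM h6
    have h8 : 1/2 * ((20 * M + 1) * r ^ γ) ≤ ρd (τ r) * ((20 * M + 1) * r ^ γ) :=
      mul_le_mul_of_nonneg_right hl (by positivity)
    nlinarith
end

section
/- Given ρ₀ > 0 and continuous functions φ₊, φ₋ : (0, ρ₀] → ℝ that extend continuously to [0, ρ₀] and satisfy 0 < Θ(r) := φ₋(r) − φ₊(r) ≤ 2π for all r ∈ (0, ρ₀], let Ω = {r e^{iθ} : 0 < r < ρ₀, φ₊(r) < θ < φ₋(r)} ⊂ ℂ be the associated polar domain. Let 0 < r₀ < ρ₀. Suppose u : ℂ → ℝ is harmonic on Ω, u(z) ≤ 1 for all z ∈ Ω, and for every boundary point ζ ∈ ∂Ω with |ζ| > r₀ one has limsup_{Ω ∋ z → ζ} u(z) ≤ 0. Then for every z ∈ Ω with |z| > r₀, u(z) ≤ (8/π) exp(−π ∫_{r₀}^{|z|} ds/(s Θ(s))). -/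
open Set

/-- `u : ℂ → ℝ` is harmonic on an open set `U ⊂ ℂ`: it is twice continuously
differentiable on `U` and its Laplacian `∂²u/∂x² + ∂²u/∂y²` vanishes on `U`. -/
def HarmonicOnSet (u : ℂ → ℝ) (U : Set ℂ) : Prop :=
  ContDiffOn ℝ 2 u U ∧
    ∀ z ∈ U,
      iteratedFDeriv ℝ 2 u z ![1, 1] + iteratedFDeriv ℝ 2 u z ![Complex.I, Complex.I] = 0

/-- The polar domain `{r e^{iθ} : 0 < r < ρ₀, φ₊(r) < θ < φ₋(r)}`. -/
def polarDomain (ρ₀ : ℝ) (φp φm : ℝ → ℝ) : Set ℂ :=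
  {z | ∃ r θ : ℝ, 0 < r ∧ r < ρ₀ ∧ φp r < θ ∧ θ < φm r ∧
      z = (r : ℂ) * Complex.exp (θ * Complex.I)}


lemma cs_int {a b : ℝ} (hab : a ≤ b) {f g : ℝ → ℝ} (hf : Continuous f) (hg : Continuous g) :
    (∫ x in a..b, f x * g x) ^ 2 ≤ (∫ x in a..b, f x ^ 2) * ∫ x in a..b, g x ^ 2 := by
  have h : ∀ y : ℝ, 0 ≤ (∫ x in a..b, g x ^ 2) * (y * y) + (2 * ∫ x in a..b, f x * g x) * y
      + ∫ x in a..b, f x ^ 2 := by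
    intro y
    have h1 : ∫ x in a..b, (f x + y * g x) ^ 2 = (∫ x in a..b, g x ^ 2) * (y * y)
        + (2 * ∫ x in a..b, f x * g x) * y + ∫ x in a..b, f x ^ 2 := by
      rw [← intervalIntegral.integral_const_mul, ← intervalIntegral.integral_mul_const,
        ← intervalIntegral.integral_mul_const, ← intervalIntegral.integral_add,
        ← intervalIntegral.integral_add]
      · congr 1; ext x; ring
      all_goals exact Continuous.intervalIntegrable (by fun_prop) _ _
    rw [← h1]
    exact intervalIntegral.integral_nonneg hab (fun x _ => sq_nonneg _)
  have := discrim_le_zero h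
  unfold discrim at this
  nlinarith

lemma F_value {x : ℝ} (hx0 : 0 < x) (hx : x < Real.pi / 2) :
    ∫ y in (0:ℝ)..x, √(Real.cos y ^ 2 - Real.cos x ^ 2) / Real.cos y =
      Real.pi / 2 * (1 - Real.cos x) := by
  have hc : 0 < Real.cos x := Real.cos_pos_of_mem_Ioo ⟨by linarith, hx⟩
  have hm : 0 < Real.sin x := Real.sin_pos_of_pos_of_lt_pi hx0 (by linarith [Real.pi_pos])
  have hcy : ∀ y ∈ Icc 0 x, 0 < Real.cos y := fun y hy =>
    Real.cos_pos_of_mem_Ioo ⟨by linarith [hy.1], by linarith [hy.2]⟩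
  have key := intervalIntegral.integral_eq_sub_of_hasDerivAt_of_le (a := 0) (b := x)
    (f := fun y => Real.arcsin (Real.sin y / Real.sin x)
      - Real.cos x * Real.arcsin (Real.cos x * Real.tan y / Real.sin x))
    (f' := fun y => √(Real.cos y ^ 2 - Real.cos x ^ 2) / Real.cos y) hx0.le ?_ ?_ ?_
  · rw [key]
    have : Real.cos x * Real.tan x / Real.sin x = 1 := by
      rw [Real.tan_eq_sin_div_cos]; field_simp
    simp [this, div_self hm.ne']
    ring
  · refine ContinuousOn.sub (by fun_prop) (continuousOn_const.mul ?_)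
    refine Real.continuous_arcsin.comp_continuousOn ?_
    refine ContinuousOn.div_const (continuousOn_const.mul ?_) _
    refine Real.continuousOn_tan_Ioo.mono ?_
    intro y hy
    exact ⟨by linarith [hy.1], by linarith [hy.2]⟩
  · intro y hy
    have hcy' := hcy y ⟨hy.1.le, hy.2.le⟩
    have hlt : Real.cos x < Real.cos y :=
      Real.cos_lt_cos_of_nonneg_of_le_pi hy.1.le (by linarith) hy.2
    have hs : 0 < Real.sin y := Real.sin_pos_of_pos_of_lt_pi hy.1 (by linarith [hy.2])
    have h1 := Real.sin_sq_add_cos_sq x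
    have h2 := Real.sin_sq_add_cos_sq y
    have hD : 0 < Real.cos y ^ 2 - Real.cos x ^ 2 := by nlinarith
    have hsl : Real.sin y < Real.sin x := by nlinarith
    set S := √(Real.cos y ^ 2 - Real.cos x ^ 2) with hS
    have hSp : 0 < S := Real.sqrt_pos.mpr hD
    have hSS : S ^ 2 = Real.cos y ^ 2 - Real.cos x ^ 2 := Real.sq_sqrt hD.le
    have e1 : √(1 - (Real.sin y / Real.sin x) ^ 2) = S / Real.sin x := by
      rw [Real.sqrt_eq_iff_mul_self_eq_of_pos (by positivity)]
      field_simp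
      nlinarith
    have e2 : √(1 - (Real.cos x * Real.tan y / Real.sin x) ^ 2)
        = S / (Real.sin x * Real.cos y) := by
      rw [Real.sqrt_eq_iff_mul_self_eq_of_pos (by positivity), Real.tan_eq_sin_div_cos]
      field_simp
      rw [hSS]
      linear_combination - Real.cos y ^ 2 * h1 + Real.cos x ^2 * h2
    have hlt1 : Real.sin y / Real.sin x < 1 := by rwa [div_lt_one hm]
    have hp1 : 0 < Real.sin y / Real.sin x := by positivity
    have hp2 : 0 < Real.cos x * Real.tan y / Real.sin x := by
      rw [Real.tan_eq_sin_div_cos]; positivity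
    have hlt2 : Real.cos x * Real.tan y / Real.sin x < 1 := by
      by_contra hcon
      push Not at hcon
      have : 1 - (Real.cos x * Real.tan y / Real.sin x) ^ 2 ≤ 0 := by nlinarith
      rw [Real.sqrt_eq_zero_of_nonpos this] at e2
      have : 0 < S / (Real.sin x * Real.cos y) := by positivity
      linarith
    have d1 := (Real.hasDerivAt_arcsin (by linarith) hlt1.ne).comp y
      ((Real.hasDerivAt_sin y).div_const (Real.sin x))
    have d2 := (Real.hasDerivAt_arcsin (by linarith) hlt2.ne).comp y
      (((Real.hasDerivAt_tan hcy'.ne').const_mul (Real.cos x)).div_const (Real.sin x))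
    have := d1.sub (d2.const_mul (Real.cos x))
    rw [e1, e2] at this
    refine this.congr_deriv ?_
    field_simp
    linear_combination -hSS
  · refine ContinuousOn.intervalIntegrable ?_
    rw [uIcc_of_le hx0.le]
    exact ContinuousOn.div (by fun_prop) (by fun_prop) (fun y hy => (hcy y hy).ne')

lemma key1D {a b : ℝ} (hab : a < b) {X X' : ℝ → ℝ} (hX : ∀ t, HasDerivAt X (X' t) t)
    (hX' : Continuous X') (ha : X a = 0) (hb : X b = 0) (h0 : ∀ t, 0 ≤ X t) {M : ℝ}
    (hM : M < Real.pi / 2) (h1 : ∀ t, X t ≤ M) :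
    Real.pi ^ 2 * (∫ t in a..b, Real.sin (X t) ^ 2) ≤
      (b - a) * (∫ t in a..b, (X' t / Real.cos (X t)) ^ 2) * ∫ t in a..b, Real.cos (X t) ^ 2 := by
  have hXc : Continuous X := continuous_iff_continuousAt.mpr fun t => (hX t).continuousAt
  have hcos : ∀ t, 0 < Real.cos (X t) := fun t =>
    Real.cos_pos_of_mem_Ioo ⟨by linarith [h0 t, Real.pi_pos], by linarith [h1 t]⟩
  have hAc : Continuous fun t => X' t / Real.cos (X t) :=
    hX'.div (by fun_prop) (fun t => (hcos t).ne')
  set A := ∫ t in a..b, (X' t / Real.cos (X t)) ^ 2 with hA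
  set I := ∫ t in a..b, Real.cos (X t) ^ 2 with hI
  have hn : ∫ t in a..b, Real.sin (X t) ^ 2 = (b - a) - I := by
    have : ∀ t, Real.sin (X t) ^ 2 = 1 - Real.cos (X t) ^ 2 := fun t => Real.sin_sq _
    simp_rw [this]
    rw [intervalIntegral.integral_sub] <;> [simp [hI]; exact Continuous.intervalIntegrable (by fun_prop) _ _; exact Continuous.intervalIntegrable (by fun_prop) _ _]
  obtain ⟨m, hm, hmax⟩ := isCompact_Icc.exists_isMaxOn (nonempty_Icc.mpr hab.le) hXc.continuousOn
  have hA0 : 0 ≤ A := intervalIntegral.integral_nonneg hab.le (fun x _ => sq_nonneg _)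
  have hI0 : 0 ≤ I := intervalIntegral.integral_nonneg hab.le (fun x _ => sq_nonneg _)
  rw [hn]
  set x := X m with hx
  rcases (h0 m).eq_or_lt with hx0 | hx0
  · have : I = b - a := by
      have : ∀ t ∈ uIcc a b, Real.cos (X t) ^ 2 = 1 := by
        intro t ht
        rw [uIcc_of_le hab.le] at ht
        have : X t = 0 := le_antisymm (by have := hmax ht; simp only [mem_ofPred_eq] at this; linarith) (h0 t)
        simp [this]
      rw [hI, intervalIntegral.integral_congr this]; simp
    rw [this]; simp; have := hab.le; positivity
  have hxp : x < Real.pi / 2 := lt_of_le_of_lt (h1 m) hM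
  set c := Real.cos x with hc
  have hcp : 0 < c := hcos m
  have hc1 : c < 1 := by
    have := Real.cos_lt_cos_of_nonneg_of_le_pi le_rfl (by linarith [Real.pi_pos]) hx0
    simpa using this
  have hcX : ∀ t ∈ Icc a b, c ≤ Real.cos (X t) := fun t ht =>
    Real.cos_le_cos_of_nonneg_of_le_pi (h0 t) (by linarith [Real.pi_pos]) (hmax ht)
  -- the integrated function
  let g : ℝ → ℝ := fun y => √(Real.cos y ^ 2 - c ^ 2) / max (Real.cos y) c
  have hg : Continuous g := by
    refine Continuous.div (by fun_prop) (by fun_prop) (fun y => ?_)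
    exact (lt_of_lt_of_le hcp (le_max_right _ _)).ne'
  let F : ℝ → ℝ := fun z => ∫ y in (0:ℝ)..z, g y
  have hF : ∀ z, HasDerivAt F (g z) z := fun z =>
    intervalIntegral.integral_hasDerivAt_right (hg.intervalIntegrable _ _)
      hg.aestronglyMeasurable.stronglyMeasurableAtFilter hg.continuousAt
  have hF0 : F 0 = 0 := by simp [F]
  have hFx : F x = Real.pi / 2 * (1 - c) := by
    rw [← F_value hx0 hxp]
    refine intervalIntegral.integral_congr (fun y hy => ?_)
    rw [uIcc_of_le hx0.le] at hy
    simp only [g]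
    rw [max_eq_left]
    exact Real.cos_le_cos_of_nonneg_of_le_pi hy.1 (by linarith [Real.pi_pos]) hy.2
  have hgX : ∀ t ∈ Icc a b, g (X t) = √(Real.cos (X t) ^ 2 - c ^ 2) / Real.cos (X t) := by
    intro t ht
    simp only [g]
    rw [max_eq_left (hcX t ht)]
  have hFX : ∀ t, HasDerivAt (fun t => F (X t)) (g (X t) * X' t) t := fun t =>
    (hF (X t)).comp t (hX t)
  have hcont : Continuous fun t => g (X t) * X' t := (hg.comp hXc).mul hX'
  have i1 : ∫ t in a..m, g (X t) * X' t = F x := by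
    rw [intervalIntegral.integral_eq_sub_of_hasDerivAt (fun t _ => hFX t)
      (hcont.intervalIntegrable _ _)]
    simp [ha, hF0, hx]
  have i2 : ∫ t in m..b, g (X t) * X' t = - F x := by
    rw [intervalIntegral.integral_eq_sub_of_hasDerivAt (fun t _ => hFX t)
      (hcont.intervalIntegrable _ _)]
    simp [hb, hF0, hx]
  have pw : ∀ κ : ℝ, ∀ t ∈ Icc a b, 2 * κ * (g (X t) * X' t) - κ ^ 2 * (Real.cos (X t) ^ 2 - c ^ 2)
      ≤ (X' t / Real.cos (X t)) ^ 2 := by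
    intro κ t ht
    rw [hgX t ht]
    have hD : 0 ≤ Real.cos (X t) ^ 2 - c ^ 2 := by nlinarith [hcX t ht]
    have hSS := Real.sq_sqrt hD
    set S := √(Real.cos (X t) ^ 2 - c ^ 2)
    rw [← hSS]
    have : 2 * κ * (S / Real.cos (X t) * X' t) = 2 * (κ * S) * (X' t / Real.cos (X t)) := by ring
    rw [this]
    nlinarith [sq_nonneg (κ * S - X' t / Real.cos (X t))]
  have hcc : Continuous fun t => Real.cos (X t) ^ 2 := by fun_prop
  have hAcc : Continuous fun t => (X' t / Real.cos (X t)) ^ 2 := by fun_prop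
  have seg : ∀ κ p q : ℝ, a ≤ p → p ≤ q → q ≤ b →
      2 * κ * (∫ t in p..q, g (X t) * X' t) - κ ^ 2 * ((∫ t in p..q, Real.cos (X t) ^ 2) - c ^ 2 * (q - p))
      ≤ ∫ t in p..q, (X' t / Real.cos (X t)) ^ 2 := by
    intro κ p q hap hpq hqb
    have : ∫ t in p..q, (2 * κ * (g (X t) * X' t) - κ ^ 2 * (Real.cos (X t) ^ 2 - c ^ 2)) =
      2 * κ * (∫ t in p..q, g (X t) * X' t) - κ ^ 2 * ((∫ t in p..q, Real.cos (X t) ^ 2) - c ^ 2 * (q - p)) := by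
      rw [intervalIntegral.integral_sub, intervalIntegral.integral_const_mul,
        intervalIntegral.integral_const_mul, intervalIntegral.integral_sub]
      · rw [intervalIntegral.integral_const, smul_eq_mul]; ring
      all_goals exact Continuous.intervalIntegrable (by fun_prop) _ _
    rw [← this]
    refine intervalIntegral.integral_mono_on hpq (Continuous.intervalIntegrable (by fun_prop) _ _)
      (Continuous.intervalIntegrable (by fun_prop) _ _) (fun t ht => pw κ t ⟨hap.trans ht.1, ht.2.trans hqb⟩)
  have tot : ∀ κ : ℝ, 2 * Real.pi * κ * (1 - c) - κ ^ 2 * (I - c ^ 2 * (b - a)) ≤ A := by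
    intro κ
    have s1 := seg κ a m le_rfl hm.1 hm.2
    have s2 := seg (-κ) m b hm.1 hm.2 le_rfl
    rw [i1, hFx] at s1
    rw [i2, hFx] at s2
    have a1 := intervalIntegral.integral_add_adjacent_intervals (hAcc.intervalIntegrable (μ := MeasureTheory.volume) a m)
      (hAcc.intervalIntegrable m b)
    have a2 := intervalIntegral.integral_add_adjacent_intervals (hcc.intervalIntegrable (μ := MeasureTheory.volume) a m)
      (hcc.intervalIntegrable m b)
    rw [hA, hI, ← a1, ← a2]
    linarith
  set D := I - c ^ 2 * (b - a) with hD
  have hL : 0 < b - a := by linarith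
  have hD0 : 0 ≤ D := by
    have : ∫ t in a..b, c ^ 2 ≤ I := intervalIntegral.integral_mono_on hab.le (by simp)
      (hcc.intervalIntegrable _ _) (fun t ht => by nlinarith [hcX t ht])
    simp at this
    linarith
  have hpi := Real.pi_pos
  have hDpos : 0 < D := by
    rcases hD0.eq_or_lt with h | h
    · exfalso
      have := tot ((A + 1) / (2 * Real.pi * (1 - c)))
      rw [← h] at this
      have hne : 1 - c ≠ 0 := by linarith
      have h2 : 2 * Real.pi * ((A + 1) / (2 * Real.pi * (1 - c))) * (1 - c) = A + 1 := by
        field_simp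
      rw [h2] at this
      linarith
    · exact h
  have hAD : Real.pi ^ 2 * (1 - c) ^ 2 ≤ A * D := by
    have := tot (Real.pi * (1 - c) / D)
    have h2 : 2 * Real.pi * (Real.pi * (1 - c) / D) * (1 - c) - (Real.pi * (1 - c) / D) ^ 2 * D
      = Real.pi ^ 2 * (1 - c) ^ 2 / D := by field_simp; ring
    rw [h2, div_le_iff₀ hDpos] at this
    exact this
  refine le_of_mul_le_mul_right ?_ hDpos
  have hLI : 0 ≤ (b - a) * I := by positivity
  calc Real.pi ^ 2 * (b - a - I) * D ≤ (b - a) * I * (Real.pi ^ 2 * (1 - c) ^ 2) := by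
        have : 0 ≤ Real.pi ^ 2 * (I - c * (b - a)) ^ 2 := by positivity
        rw [hD]; linarith [this]
    _ ≤ (b - a) * I * (A * D) := by gcongr
    _ = (b - a) * A * I * D := by ring


noncomputable def gdi (x : ℝ) : ℝ := Real.arsinh (Real.tan x)

lemma gdi_zero : gdi 0 = 0 := by simp [gdi]

lemma gdi_deriv {x : ℝ} (hx : 0 < Real.cos x) : HasDerivAt gdi (1 / Real.cos x) x := by
  have := (Real.hasDerivAt_tan hx.ne').arsinh
  refine this.congr_deriv ?_
  have h : √(1 + Real.tan x ^ 2) = 1 / Real.cos x := by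
    rw [Real.sqrt_eq_iff_mul_self_eq_of_pos (by positivity), Real.tan_eq_sin_div_cos]
    field_simp
    linarith [Real.sin_sq_add_cos_sq x]
  rw [h, smul_eq_mul]
  field_simp

lemma cos_pos' {x : ℝ} (h0 : 0 ≤ x) (h : x < Real.pi / 2) : 0 < Real.cos x :=
  Real.cos_pos_of_mem_Ioo ⟨by linarith [Real.pi_pos], h⟩

lemma gdi_cmp {x : ℝ} (h0 : 0 ≤ x) (h : x < Real.pi / 2) {f f' : ℝ → ℝ} (hf0 : f 0 = 0)
    (hf : ∀ y ∈ Icc 0 x, HasDerivAt f (f' y) y) (hle : ∀ y ∈ Icc 0 x, f' y ≤ 1 / Real.cos y) :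
    f x ≤ gdi x := by
  have hd : ∀ y ∈ Icc 0 x, HasDerivAt (fun y => gdi y - f y) (1 / Real.cos y - f' y) y :=
    fun y hy => (gdi_deriv (cos_pos' hy.1 (hy.2.trans_lt h))).sub (hf y hy)
  have := monotoneOn_of_deriv_nonneg (convex_Icc 0 x)
    (f := fun y => gdi y - f y) (fun y hy => (hd y hy).continuousAt.continuousWithinAt)
    (fun y hy => (hd y (interior_subset hy)).differentiableAt.differentiableWithinAt)
    (fun y hy => by
      rw [(hd y (interior_subset hy)).deriv]
      linarith [hle y (interior_subset hy)])
  have := this (left_mem_Icc.mpr h0) (right_mem_Icc.mpr h0) h0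
  simp only [gdi_zero, hf0] at this
  linarith

lemma le_gdi {x : ℝ} (h0 : 0 ≤ x) (h : x < Real.pi / 2) : x ≤ gdi x := by
  refine gdi_cmp h0 h (f := fun x => x) (f' := fun _ => 1) rfl (fun y _ => hasDerivAt_id' y) ?_
  intro y hy
  rw [le_div_iff₀ (cos_pos' hy.1 (hy.2.trans_lt h))]
  linarith [Real.cos_le_one y]

lemma gdi_mono {x y : ℝ} (h0 : 0 ≤ x) (hxy : x ≤ y) (h : y < Real.pi / 2) : gdi x ≤ gdi y := by
  unfold gdi
  rw [Real.arsinh_le_arsinh]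
  exact Real.strictMonoOn_tan.monotoneOn ⟨by linarith [Real.pi_pos], by linarith⟩
    ⟨by linarith [Real.pi_pos], h⟩ hxy

lemma cos_quartic {x : ℝ} (h0 : 0 ≤ x) : Real.cos x ≤ 1 - x ^ 2 / 2 + x ^ 4 / 24 := by
  have hd : ∀ y : ℝ, HasDerivAt (fun y : ℝ => 1 - y ^ 2 / 2 + y ^ 4 / 24 - Real.cos y)
      (Real.sin y - (y - y ^ 3 / 6)) y := by
    intro y
    have := ((((hasDerivAt_pow 2 y).div_const 2).const_sub 1).add
      ((hasDerivAt_pow 4 y).div_const 24)).sub (Real.hasDerivAt_cos y)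
    refine this.congr_deriv ?_
    push_cast; ring
  have := monotoneOn_of_deriv_nonneg (convex_Ici 0)
    (f := fun y : ℝ => 1 - y ^ 2 / 2 + y ^ 4 / 24 - Real.cos y)
    (fun y _ => (hd y).continuousAt.continuousWithinAt)
    (fun y _ => (hd y).differentiableAt.differentiableWithinAt)
    (fun y hy => by
      rw [(hd y).deriv]
      linarith [Real.sin_ge_sub_cube (interior_subset hy : (0:ℝ) ≤ y)])
  have := this (mem_Ici.mpr le_rfl) (mem_Ici.mpr h0) h0
  norm_num at this
  linarith

lemma gdi_bound {x : ℝ} (h0 : 0 ≤ x) (h : x < Real.pi / 2) :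
    x ^ 2 * (gdi x ^ 2 + 4) ≤ 4 * gdi x ^ 2 := by
  have hpi : Real.pi < 3.1416 := Real.pi_lt_d4
  have key : 2 * x / √(4 - x ^ 2) ≤ gdi x := by
    refine gdi_cmp h0 h (f := fun x => 2 * x / √(4 - x ^ 2))
      (f' := fun x => 8 / ((4 - x ^ 2) * √(4 - x ^ 2))) (by simp) ?_ ?_
    · intro y hy
      have hy2 : y < 1.5708 := by linarith [hy.2]
      have hp : 0 < 4 - y ^ 2 := by nlinarith [hy.1]
      have hs : 0 < √(4 - y ^ 2) := Real.sqrt_pos.mpr hp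
      have hss := Real.sq_sqrt hp.le
      have d1 : HasDerivAt (fun y : ℝ => 4 - y ^ 2) (-(2 * y)) y := by
        simpa using (hasDerivAt_pow 2 y).const_sub 4
      have := ((hasDerivAt_id' y).const_mul 2).div (d1.sqrt hp.ne') hs.ne'
      refine this.congr_deriv ?_
      rw [hss]
      field_simp
      rw [hss]; ring
    · intro y hy
      have hy2 : y < 1.5708 := by linarith [hy.2]
      have hp : 0 < 4 - y ^ 2 := by nlinarith [hy.1]
      have hs : 0 < √(4 - y ^ 2) := Real.sqrt_pos.mpr hp
      have hss := Real.sq_sqrt hp.le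
      have hc := cos_pos' hy.1 (hy.2.trans_lt h)
      rw [div_le_div_iff₀ (by positivity) hc, one_mul]
      refine abs_le_of_sq_le_sq' ?_ (by positivity) |>.2
      have hcb : Real.cos y ≤ 1 - y ^ 2 / 2 + y ^ 4 / 24 := by
        exact cos_quartic hy.1
      have h1 : Real.cos y ^ 2 ≤ (1 - y ^ 2 / 2 + y ^ 4 / 24) ^ 2 := by gcongr
      have : ((4 - y ^ 2) * √(4 - y ^ 2)) ^ 2 = (4 - y ^ 2) ^ 3 := by
        rw [mul_pow, hss]; ring
      rw [this]
      set w := y ^ 2 with hw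
      have hw0 : 0 ≤ w := by positivity
      have hw1 : w ≤ 2.4675 := by nlinarith [hy.1]
      have e : y ^ 4 = w ^ 2 := by rw [hw]; ring
      rw [e] at h1
      have : 64 * (1 - w / 2 + w ^ 2 / 24) ^ 2 ≤ (4 - w) ^ 3 := by
        have hq : 0 ≤ w * (0.25 - (7 / 48) * w + (5 / 192) * w ^ 2 - w ^ 3 / 576) := by
          refine mul_nonneg hw0 ?_
          nlinarith [mul_nonneg hw0 (sub_nonneg.mpr hw1), sq_nonneg (w - 2), sq_nonneg w, mul_nonneg (sq_nonneg (w-2)) (sub_nonneg.mpr hw1)]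
        nlinarith [hq]
      nlinarith
  have hx2 : x < 1.5708 := by linarith
  have hp : 0 < 4 - x ^ 2 := by nlinarith
  have hs : 0 < √(4 - x ^ 2) := Real.sqrt_pos.mpr hp
  have hss := Real.sq_sqrt hp.le
  have h2 : (2 * x / √(4 - x ^ 2)) ^ 2 ≤ gdi x ^ 2 := by gcongr
  rw [div_pow, hss, div_le_iff₀ hp] at h2
  nlinarith

lemma tent_gen {a b m : ℝ} (hm : m ∈ Icc a b) {f f' h H : ℝ → ℝ} (hf : ∀ t, HasDerivAt f (f' t) t)
    (hf' : Continuous f') (ha : f a = 0) (hb : f b = 0) (hH : ∀ y, HasDerivAt H (h y) y)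
    (hh : Continuous h) (hH0 : H 0 = 0) (κ : ℝ) :
    4 * κ * H (f m) - κ ^ 2 * (∫ t in a..b, h (f t) ^ 2) ≤ ∫ t in a..b, f' t ^ 2 := by
  have hfc : Continuous f := continuous_iff_continuousAt.mpr fun t => (hf t).continuousAt
  have hFX : ∀ t, HasDerivAt (fun t => H (f t)) (h (f t) * f' t) t := fun t =>
    (hH (f t)).comp t (hf t)
  have hcont : Continuous fun t => h (f t) * f' t := (hh.comp hfc).mul hf'
  have i1 : ∫ t in a..m, h (f t) * f' t = H (f m) := by
    rw [intervalIntegral.integral_eq_sub_of_hasDerivAt (fun t _ => hFX t)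
      (hcont.intervalIntegrable _ _)]
    simp [ha, hH0]
  have i2 : ∫ t in m..b, h (f t) * f' t = - H (f m) := by
    rw [intervalIntegral.integral_eq_sub_of_hasDerivAt (fun t _ => hFX t)
      (hcont.intervalIntegrable _ _)]
    simp [hb, hH0]
  have seg : ∀ κ p q : ℝ, p ≤ q →
      2 * κ * (∫ t in p..q, h (f t) * f' t) - κ ^ 2 * (∫ t in p..q, h (f t) ^ 2)
      ≤ ∫ t in p..q, f' t ^ 2 := by
    intro κ p q hpq
    have : ∫ t in p..q, (2 * κ * (h (f t) * f' t) - κ ^ 2 * (h (f t) ^ 2)) =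
      2 * κ * (∫ t in p..q, h (f t) * f' t) - κ ^ 2 * ((∫ t in p..q, h (f t) ^ 2)) := by
      rw [intervalIntegral.integral_sub, intervalIntegral.integral_const_mul,
        intervalIntegral.integral_const_mul]
      all_goals exact Continuous.intervalIntegrable (by fun_prop) _ _
    rw [← this]
    refine intervalIntegral.integral_mono_on hpq (Continuous.intervalIntegrable (by fun_prop) _ _)
      (Continuous.intervalIntegrable (by fun_prop) _ _) (fun t ht => ?_)
    nlinarith [sq_nonneg (κ * h (f t) - f' t)]
  have s1 := seg κ a m hm.1
  have s2 := seg (-κ) m b hm.2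
  rw [i1] at s1
  rw [i2] at s2
  have c1 : Continuous fun t => f' t ^ 2 := by fun_prop
  have c2 : Continuous fun t => h (f t) ^ 2 := by fun_prop
  rw [← intervalIntegral.integral_add_adjacent_intervals (c1.intervalIntegrable a m) (c1.intervalIntegrable m b),
   ← intervalIntegral.integral_add_adjacent_intervals (c2.intervalIntegrable a m) (c2.intervalIntegrable m b)]
  linarith

lemma tent1 {a b m : ℝ} (hab : a < b) (hm : m ∈ Icc a b) {f f' : ℝ → ℝ}
    (hf : ∀ t, HasDerivAt f (f' t) t)
    (hf' : Continuous f') (ha : f a = 0) (hb : f b = 0) :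
    4 * f m ^ 2 ≤ (b - a) * ∫ t in a..b, f' t ^ 2 := by
  have := tent_gen hm hf hf' ha hb (H := fun y => y) (h := fun _ => 1) (fun y => hasDerivAt_id' y)
    continuous_const rfl (2 * f m / (b - a))
  have hL : 0 < b - a := by linarith
  simp only [one_pow, intervalIntegral.integral_const, smul_eq_mul, mul_one] at this
  have e : 4 * (2 * f m / (b - a)) * f m - (2 * f m / (b - a)) ^ 2 * (b - a) = 4 * f m ^ 2 / (b - a) := by
    field_simp; ring
  rw [e, div_le_iff₀ hL] at this
  linarith

lemma tent2 {a b m : ℝ} (hm : m ∈ Icc a b) {f f' : ℝ → ℝ}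
    (hf : ∀ t, HasDerivAt f (f' t) t)
    (hf' : Continuous f') (ha : f a = 0) (hb : f b = 0) (hP : 0 < ∫ t in a..b, f t ^ 2) :
    f m ^ 4 ≤ (∫ t in a..b, f t ^ 2) * ∫ t in a..b, f' t ^ 2 := by
  set P := ∫ t in a..b, f t ^ 2 with hPd
  have := tent_gen hm hf hf' ha hb (H := fun y => y ^ 2 / 2) (h := fun y => y)
    (fun y => by simpa using (hasDerivAt_pow 2 y).div_const 2)
    continuous_id (by simp) (f m ^ 2 / P)
  rw [← hPd] at this
  have e : 4 * (f m ^ 2 / P) * (f m ^ 2 / 2) - (f m ^ 2 / P) ^ 2 * P = f m ^ 4 / P := by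
    field_simp; ring
  rw [e, div_le_iff₀ hP] at this
  linarith

lemma ode_step {s t : ℝ} {Y Y' L Lam F G : ℝ → ℝ}
    (hY : ∀ r ∈ Icc s t, HasDerivAt Y (Y' r) r) (hYp : ∀ r ∈ Icc s t, 0 < Y r)
    (hL : ∀ r ∈ Icc s t, 0 < L r) (hLam : ∀ r ∈ Icc s t, HasDerivAt Lam (1 / L r) r)
    (hF : ∀ y, 0 < y → HasDerivAt F (-(1 / G y)) y) (hG : ∀ y, 0 < y → 0 < G y)
    (h : ∀ r ∈ Icc s t, G (Y r) ≤ - (L r * Y' r)) {u v : ℝ} (hu : s ≤ u) (huv : u ≤ v)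
    (hv : v ≤ t) : Lam v - Lam u ≤ F (Y v) - F (Y u) := by
  have hd : ∀ r ∈ Icc s t, HasDerivAt (fun r => F (Y r) - Lam r)
      (-(1 / G (Y r)) * Y' r - 1 / L r) r := fun r hr =>
    ((hF (Y r) (hYp r hr)).comp r (hY r hr)).sub (hLam r hr)
  have := monotoneOn_of_deriv_nonneg (convex_Icc s t)
    (f := fun r => F (Y r) - Lam r) (fun y hy => (hd y hy).continuousAt.continuousWithinAt)
    (fun y hy => (hd y (interior_subset hy)).differentiableAt.differentiableWithinAt)
    (fun y hy => by
      have hy := interior_subset hy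
      rw [(hd y hy).deriv]
      have h1 := hL y hy
      have h2 := hG _ (hYp y hy)
      have h3 := h y hy
      have : -(1 / G (Y y)) * Y' y - 1 / L y = (-(L y * Y' y) - G (Y y)) / (G (Y y) * L y) := by
        field_simp
      rw [this]
      exact div_nonneg (by linarith) (by positivity))
  have := this ⟨hu, huv.trans hv⟩ ⟨hu.trans huv, hv⟩ huv
  simp only at this
  linarith

lemma crossing {s t : ℝ} (hst : s ≤ t) {Y : ℝ → ℝ} (hY : ContinuousOn Y (Icc s t)) (y : ℝ) :
    ∃ c ∈ Icc s t, (y ≤ Y c ∨ c = s) ∧ (Y c ≤ y ∨ c = t) := by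
  by_cases h1 : Y s ≤ y
  · exact ⟨s, left_mem_Icc.mpr hst, Or.inr rfl, Or.inl h1⟩
  by_cases h2 : y ≤ Y t
  · exact ⟨t, right_mem_Icc.mpr hst, Or.inl h2, Or.inr rfl⟩
  push Not at h1 h2
  obtain ⟨c, hc, hcy⟩ := intermediate_value_Icc' hst hY ⟨h2.le, h1.le⟩
  exact ⟨c, hc, Or.inl hcy.ge, Or.inl hcy.le⟩

lemma ode_main {s t q : ℝ} (hst : s ≤ t) (hq : 0 < q) {Y Y' L Lam : ℝ → ℝ}
    (hY : ∀ r ∈ Icc s t, HasDerivAt Y (Y' r) r) (hYp : ∀ r ∈ Icc s t, 0 < Y r)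
    (hL : ∀ r ∈ Icc s t, 0 < L r) (hLam : ∀ r ∈ Icc s t, HasDerivAt Lam (1 / L r) r)
    (h1 : ∀ r ∈ Icc s t, Y r ^ 2 + 2 * Real.pi * Y r ≤ - (L r * Y' r))
    (h2 : ∀ r ∈ Icc s t, 2 * Y r + 4 * q ≤ - (L r * Y' r))
    (h3 : ∀ r ∈ Icc s t, 2 * Y r + 2 * q ^ 2 / Y r ≤ - (L r * Y' r)) :
    Lam t - Lam s ≤ 1 / (2 * Real.pi) * Real.log (1 + 2 * Real.pi / (14 / 15 * q))
      + 1 / 2 * Real.log (88 / 75) + 1 / 4 * Real.log (5 / 4) := by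
  have hpi := Real.pi_pos
  have hYc : ContinuousOn Y (Icc s t) := fun r hr => (hY r hr).continuousAt.continuousWithinAt
  have S1 := fun {u v : ℝ} => ode_step (F := fun y => 1 / (2 * Real.pi) * Real.log (1 + 2 * Real.pi / y))
    (G := fun y => y ^ 2 + 2 * Real.pi * y) (u := u) (v := v) hY hYp hL hLam
    (fun y hy => by
      have d := (((hasDerivAt_inv hy.ne').const_mul (2 * Real.pi)).const_add 1).log (by positivity)
      have := d.const_mul (1 / (2 * Real.pi))
      simp only [← div_eq_mul_inv] at this
      refine this.congr_deriv ?_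
      field_simp) (fun y hy => by positivity) h1
  have S2 := fun {u v : ℝ} => ode_step (F := fun y => - (1 / 2 * Real.log (2 * y + 4 * q)))
    (G := fun y => 2 * y + 4 * q) (u := u) (v := v) hY hYp hL hLam
    (fun y hy => by
      have d := (((hasDerivAt_id' y).const_mul 2).add_const (4 * q)).log (by positivity)
      have := (d.const_mul (1 / 2)).neg
      refine this.congr_deriv ?_
      field_simp) (fun y hy => by positivity) h2
  have S3 := fun {u v : ℝ} => ode_step (F := fun y => - (1 / 4 * Real.log (y ^ 2 + q ^ 2)))
    (G := fun y => 2 * y + 2 * q ^ 2 / y) (u := u) (v := v) hY hYp hL hLam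
    (fun y hy => by
      have d := ((hasDerivAt_pow 2 y).add_const (q ^ 2)).log (by positivity)
      have := (d.const_mul (1 / 4)).neg
      refine this.congr_deriv ?_
      field_simp
      ring) (fun y hy => by positivity) h3
  obtain ⟨c, hc, hc1, hc2⟩ := crossing hst hYc (14 / 15 * q)
  obtain ⟨d, hd, hd1, hd2⟩ := crossing hc.2 (hYc.mono (Icc_subset_Icc_left hc.1)) (1 / 2 * q)
  have b1 : Lam c - Lam s ≤ 1 / (2 * Real.pi) * Real.log (1 + 2 * Real.pi / (14 / 15 * q)) := by
    have hnn : 0 ≤ 1 / (2 * Real.pi) * Real.log (1 + 2 * Real.pi / (14 / 15 * q)) := by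
      have : 0 ≤ Real.log (1 + 2 * Real.pi / (14 / 15 * q)) := Real.log_nonneg (by
        have : 0 ≤ 2 * Real.pi / (14 / 15 * q) := by positivity
        linarith)
      positivity
    rcases hc1 with h | h
    · have := S1 (u := s) (v := c) le_rfl hc.1 hc.2
      have hs : 0 ≤ 1 / (2 * Real.pi) * Real.log (1 + 2 * Real.pi / Y s) := by
        have hh := hYp s (left_mem_Icc.mpr hst)
        have : 0 ≤ Real.log (1 + 2 * Real.pi / Y s) := Real.log_nonneg (by
          have : 0 ≤ 2 * Real.pi / (Y s) := by positivity
          linarith)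
        positivity
      have : 1 / (2 * Real.pi) * Real.log (1 + 2 * Real.pi / Y c) ≤ 1 / (2 * Real.pi) * Real.log (1 + 2 * Real.pi / (14 / 15 * q)) := by
        have hh := hYp c hc
        gcongr
      linarith
    · subst h; simpa using hnn
  have b2 : Lam d - Lam c ≤ 1 / 2 * Real.log (88 / 75) := by
    have hnn : 0 ≤ 1 / 2 * Real.log (88 / 75) := by
      have := Real.log_nonneg (x := 88/75) (by norm_num)
      positivity
    rcases hc2 with h | h
    · rcases hd1 with h' | h'
      · have := S2 (u := c) (v := d) hc.1 hd.1 hd.2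
        have g1 : Real.log (5 * q) ≤ Real.log (2 * Y d + 4 * q) := by
          apply Real.log_le_log (by positivity); linarith
        have g2 : Real.log (2 * Y c + 4 * q) ≤ Real.log (88 / 75 * (5 * q)) := by
          have := hYp c hc
          apply Real.log_le_log (by positivity); linarith
        rw [Real.log_mul (by norm_num) (by positivity)] at g2
        linarith
      · subst h'; simpa using hnn
    · have : d = c := le_antisymm (by rw [h]; exact hd.2) hd.1
      subst this; simpa using hnn
  have b3 : Lam t - Lam d ≤ 1 / 4 * Real.log (5 / 4) := by
    have hnn : 0 ≤ 1 / 4 * Real.log (5 / 4) := by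
      have := Real.log_nonneg (x := 5/4) (by norm_num)
      positivity
    rcases hd2 with h | h
    · have := S3 (u := d) (v := t) (hc.1.trans hd.1) hd.2 le_rfl
      have g1 : Real.log (q ^ 2) ≤ Real.log (Y t ^ 2 + q ^ 2) := by
        apply Real.log_le_log (by positivity); nlinarith
      have hyd := hYp d ⟨hc.1.trans hd.1, hd.2⟩
      have g2 : Real.log (Y d ^ 2 + q ^ 2) ≤ Real.log (5 / 4 * q ^ 2) := by
        apply Real.log_le_log (by positivity); nlinarith
      rw [Real.log_mul (by norm_num) (by positivity)] at g2
      linarith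
    · subst h; simpa using hnn
  linarith

lemma final_num {x Λ : ℝ} (hx0 : 0 < x) (hx : x < Real.pi / 2)
    (h : Λ ≤ 1 / (2 * Real.pi) * Real.log (1 + 2 * Real.pi / (14 / 15 * gdi x ^ 2))
      + 1 / 2 * Real.log (88 / 75) + 1 / 4 * Real.log (5 / 4)) :
    x ≤ 4 * Real.exp (-Real.pi * Λ) := by
  have hpi := Real.pi_pos
  have hp1 : Real.pi < 3.1416 := Real.pi_lt_d4
  have hp2 : 3.1415 < Real.pi := Real.pi_gt_d4
  set p := gdi x with hp
  have hpp : 0 < p := hx0.trans_le (le_gdi hx0.le hx)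
  set E := Real.exp (Real.pi * (Real.log (88 / 75) + 1 / 2 * Real.log (5 / 4))) with hE
  have h5 : Real.log (88 / 75) + 1 / 2 * Real.log (5 / 4) ≤ 0.2715 := by
    have : 2 * (Real.log (88 / 75) + 1 / 2 * Real.log (5 / 4)) = Real.log ((88/75)^2 * (5/4)) := by
      rw [Real.log_mul (by norm_num) (by norm_num), Real.log_pow]; push_cast; ring
    have h6 : Real.log ((88/75)^2 * (5/4)) ≤ 0.543 := by
      rw [Real.log_le_iff_le_exp (by norm_num)]
      have := Real.sum_le_exp_of_nonneg (x := 0.543) (by norm_num) 6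
      simp only [Finset.sum_range_succ, Finset.sum_range_zero, Nat.factorial] at this
      norm_num at this ⊢
      linarith
    linarith
  have hEb : E ≤ 2.36 := by
    have : E ≤ Real.exp (1 + (-0.147)) := by
      rw [hE]; apply Real.exp_le_exp.mpr
      nlinarith
    rw [Real.exp_add, Real.exp_neg] at this
    have e1 := Real.exp_one_lt_d9
    have e2 := Real.quadratic_le_exp_of_nonneg (x := 0.147) (by norm_num)
    have : Real.exp 1 * (Real.exp 0.147)⁻¹ ≤ 2.7182818286 * (1 + 0.147 + 0.147^2/2)⁻¹ := by
      gcongr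
    norm_num at this ⊢
    linarith
  have hΛ : Real.exp (2 * Real.pi * Λ) ≤ (1 + 2 * Real.pi / (14 / 15 * p ^ 2)) * E := by
    have : 2 * Real.pi * Λ ≤ Real.log (1 + 2 * Real.pi / (14 / 15 * p ^ 2)) +
        Real.pi * (Real.log (88 / 75) + 1 / 2 * Real.log (5 / 4)) := by
      calc 2 * Real.pi * Λ ≤ 2 * Real.pi * (1 / (2 * Real.pi) * Real.log (1 + 2 * Real.pi / (14 / 15 * p ^ 2))
      + 1 / 2 * Real.log (88 / 75) + 1 / 4 * Real.log (5 / 4)) := by gcongr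
        _ = _ := by field_simp; ring
    refine (Real.exp_le_exp.mpr this).trans ?_
    rw [Real.exp_add, Real.exp_log (by positivity)]
  have hb := gdi_bound hx0.le hx
  rw [← hp] at hb
  have main : x ^ 2 * Real.exp (2 * Real.pi * Λ) ≤ 16 := by
    have h1 : x ^ 2 ≤ 4 * p ^ 2 / (p ^ 2 + 4) := by
      rw [le_div_iff₀ (by positivity)]; exact hb
    calc x ^ 2 * Real.exp (2 * Real.pi * Λ)
        ≤ (4 * p ^ 2 / (p ^ 2 + 4)) * ((1 + 2 * Real.pi / (14 / 15 * p ^ 2)) * 2.36) := by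
          gcongr; exact hΛ.trans (by gcongr)
      _ = 4 * 2.36 * (p ^ 2 + 15 / 7 * Real.pi) / (p ^ 2 + 4) := by field_simp; ring
      _ ≤ 16 := by
          rw [div_le_iff₀ (by positivity)]
          nlinarith [sq_nonneg p]
  have e : Real.exp (2 * Real.pi * Λ) = (Real.exp (Real.pi * Λ)) ^ 2 := by
    rw [← Real.exp_nat_mul]; congr 1; push_cast; ring
  rw [e, ← mul_pow] at main
  have : x * Real.exp (Real.pi * Λ) ≤ 4 := by
    have := Real.exp_pos (Real.pi * Λ)
    nlinarith
  rw [neg_mul, Real.exp_neg, ← div_eq_mul_inv, le_div_iff₀ (Real.exp_pos _)]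
  exact this


lemma slice_cont {F : ℝ → ℝ → ℝ} {t0 s : ℝ}
    (hF : ContinuousOn (Function.uncurry F) (Ioi t0 ×ˢ univ)) (hs : t0 < s) : Continuous (F s) := by
  rw [← continuousOn_univ]
  exact hF.comp (f := fun θ => (s, θ)) (by fun_prop) (fun θ _ => ⟨hs, mem_univ _⟩)

lemma dui {F F' : ℝ → ℝ → ℝ} {t0 : ℝ} (a b : ℝ)
    (hF : ContinuousOn (Function.uncurry F) (Ioi t0 ×ˢ univ))
    (hF' : ContinuousOn (Function.uncurry F') (Ioi t0 ×ˢ univ))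
    (hd : ∀ s, t0 < s → ∀ θ, HasDerivAt (fun s => F s θ) (F' s θ) s) {s : ℝ} (hs : t0 < s) :
    HasDerivAt (fun s => ∫ θ in a..b, F s θ) (∫ θ in a..b, F' s θ) s := by
  set δ := (s - t0) / 2 with hδ
  have hδ0 : 0 < δ := by simp only [hδ]; linarith
  have hK : IsCompact (Icc (s - δ) (s + δ) ×ˢ uIcc a b) := isCompact_Icc.prod isCompact_uIcc
  have hsub : Icc (s - δ) (s + δ) ×ˢ uIcc a b ⊆ Ioi t0 ×ˢ univ := by
    rintro ⟨x, y⟩ ⟨hx, -⟩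
    refine ⟨?_, mem_univ _⟩
    have := hx.1
    simp only [mem_Ioi]
    simp only at this
    linarith
  obtain ⟨C, hC⟩ := hK.exists_bound_of_continuousOn (hF'.mono hsub)
  refine (intervalIntegral.hasDerivAt_integral_of_dominated_loc_of_deriv_le
    (F := F) (F' := F') (bound := fun _ => C) (s := Icc (s - δ) (s + δ))
    (Icc_mem_nhds (by linarith) (by linarith)) ?_ ?_ ?_ ?_ ?_ ?_).2
  · filter_upwards [lt_mem_nhds hs] with x hx
    exact (slice_cont hF hx).aestronglyMeasurable
  · exact (slice_cont hF hs).intervalIntegrable _ _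
  · exact (slice_cont hF' hs).aestronglyMeasurable
  · refine Filter.Eventually.of_forall (fun θ hθ x hx => ?_)
    exact hC (x, θ) ⟨hx, uIoc_subset_uIcc hθ⟩
  · simp
  · refine Filter.Eventually.of_forall (fun θ hθ x hx => ?_)
    exact hd x (hsub (mk_mem_prod hx (left_mem_uIcc (a := a) (b := b)))).1 θ

lemma cont_int {F : ℝ → ℝ → ℝ} {s : ℝ} (a b : ℝ)
    (hF : ContinuousOn (Function.uncurry F) (Ici s ×ˢ univ)) :
    ContinuousOn (fun s => ∫ θ in a..b, F s θ) (Ici s) := by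
  have h1 : Continuous (Function.uncurry fun x θ => F (max s x) θ) := by
    rw [← continuousOn_univ]
    exact hF.comp (f := fun q : ℝ × ℝ => (max s q.1, q.2)) (by fun_prop)
      (fun q _ => ⟨mem_Ici.mpr (le_max_left _ _), mem_univ _⟩)
  have h2 := intervalIntegral.continuous_parametric_intervalIntegral_of_continuous' 
    (μ := MeasureTheory.volume) h1 a b
  refine h2.continuousOn.congr (fun x hx => ?_)
  simp only [max_eq_right (mem_Ici.mp hx)]

structure Strip (t0 T R M : ℝ) (a b : ℝ → ℝ) (X Xs Xt Xss Xtt : ℝ → ℝ → ℝ) : Prop where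
  ha : Continuous a
  hb : Continuous b
  hab : ∀ s, a s < b s
  haR : ∀ s, -R ≤ a s
  hbR : ∀ s, b s ≤ R
  hM : M < Real.pi / 2
  X0 : ∀ s, t0 < s → ∀ θ, 0 ≤ X s θ
  XM : ∀ s, t0 < s → ∀ θ, X s θ ≤ M
  cX : ContinuousOn (Function.uncurry X) (Ioi t0 ×ˢ univ)
  cXs : ContinuousOn (Function.uncurry Xs) (Ioi t0 ×ˢ univ)
  cXt : ContinuousOn (Function.uncurry Xt) (Ioi t0 ×ˢ univ)
  cXss : ContinuousOn (Function.uncurry Xss) (Ioi t0 ×ˢ univ)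
  cXtt : ContinuousOn (Function.uncurry Xtt) (Ioi t0 ×ˢ univ)
  dXs : ∀ s, t0 < s → ∀ θ, HasDerivAt (fun s => X s θ) (Xs s θ) s
  dXss : ∀ s, t0 < s → ∀ θ, HasDerivAt (fun s => Xs s θ) (Xss s θ) s
  dXt : ∀ s, t0 < s → ∀ θ, HasDerivAt (fun θ => X s θ) (Xt s θ) θ
  dXtt : ∀ s, t0 < s → ∀ θ, HasDerivAt (fun θ => Xt s θ) (Xtt s θ) θ
  sub : ∀ s, t0 < s → ∀ θ, 0 ≤ Xss s θ + Xtt s θ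
  van : ∀ s, t0 < s → ∀ θ, θ ∉ Ioo (a s) (b s) → ∀ᶠ q in nhds (s, θ), X q.1 q.2 = 0
  vanT : ∀ s, t0 < s → T ≤ s → ∀ θ, X s θ = 0

namespace Strip
variable {t0 T R M : ℝ} {a b : ℝ → ℝ} {X Xs Xt Xss Xtt : ℝ → ℝ → ℝ}

noncomputable def Y (R : ℝ) (X Xs : ℝ → ℝ → ℝ) (s : ℝ) : ℝ :=
  - ∫ θ in (-R)..R, Real.tan (X s θ) * Xs s θ

noncomputable def Yd (R : ℝ) (X Xs Xss : ℝ → ℝ → ℝ) (s : ℝ) : ℝ :=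
  - ∫ θ in (-R)..R, ((Xs s θ / Real.cos (X s θ)) ^ 2 + Real.tan (X s θ) * Xss s θ)

lemma van0 (S : Strip t0 T R M a b X Xs Xt Xss Xtt) {s : ℝ} (hs : t0 < s) {θ : ℝ}
    (h : θ ∉ Ioo (a s) (b s)) : X s θ = 0 :=
  (S.van s hs θ h).self_of_nhds

lemma cosp (S : Strip t0 T R M a b X Xs Xt Xss Xtt) {s : ℝ} (hs : t0 < s) (θ : ℝ) :
    0 < Real.cos (X s θ) := cos_pos' (S.X0 s hs θ) ((S.XM s hs θ).trans_lt S.hM)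

lemma ccos (S : Strip t0 T R M a b X Xs Xt Xss Xtt) :
    ContinuousOn (fun q : ℝ × ℝ => Real.cos (X q.1 q.2)) (Ioi t0 ×ˢ univ) :=
  Real.continuous_cos.comp_continuousOn S.cX

lemma ctan (S : Strip t0 T R M a b X Xs Xt Xss Xtt) :
    ContinuousOn (fun q : ℝ × ℝ => Real.tan (X q.1 q.2)) (Ioi t0 ×ˢ univ) := by
  intro q hq
  have h : ContinuousAt Real.tan (Function.uncurry X q) :=
    Real.continuousAt_tan.mpr (S.cosp hq.1 q.2).ne'
  exact h.comp_continuousWithinAt (S.cX q hq)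

lemma cgdi (S : Strip t0 T R M a b X Xs Xt Xss Xtt) :
    ContinuousOn (fun q : ℝ × ℝ => gdi (X q.1 q.2)) (Ioi t0 ×ˢ univ) := 
  Real.continuous_arsinh.comp_continuousOn S.ctan

lemma dtan (S : Strip t0 T R M a b X Xs Xt Xss Xtt) {s : ℝ} (hs : t0 < s) (θ : ℝ) :
    HasDerivAt (fun s => Real.tan (X s θ) * Xs s θ)
      ((Xs s θ / Real.cos (X s θ)) ^ 2 + Real.tan (X s θ) * Xss s θ) s := by
  have := ((Real.hasDerivAt_tan (S.cosp hs θ).ne').comp s (S.dXs s hs θ)).mul (S.dXss s hs θ)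
  refine this.congr_deriv ?_
  have := (S.cosp hs θ).ne'
  simp only [Function.comp]
  field_simp

lemma dtant (S : Strip t0 T R M a b X Xs Xt Xss Xtt) {s : ℝ} (hs : t0 < s) (θ : ℝ) :
    HasDerivAt (fun θ => Real.tan (X s θ) * Xt s θ)
      ((Xt s θ / Real.cos (X s θ)) ^ 2 + Real.tan (X s θ) * Xtt s θ) θ := by
  have := ((Real.hasDerivAt_tan (S.cosp hs θ).ne').comp θ (S.dXt s hs θ)).mul (S.dXtt s hs θ)
  refine this.congr_deriv ?_
  have := (S.cosp hs θ).ne'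
  simp only [Function.comp]
  field_simp

lemma hY (S : Strip t0 T R M a b X Xs Xt Xss Xtt) {s : ℝ} (hs : t0 < s) :
    HasDerivAt (Y R X Xs) (Yd R X Xs Xss s) s := by
  refine (dui (t0 := t0) (F := fun s θ => Real.tan (X s θ) * Xs s θ)
    (F' := fun s θ => ((Xs s θ / Real.cos (X s θ)) ^ 2 + Real.tan (X s θ) * Xss s θ)) (-R) R
    ?_ ?_ (fun s hs θ => S.dtan hs θ) hs).neg
  · exact S.ctan.mul S.cXs
  · exact ((S.cXs.div S.ccos (fun q hq => (S.cosp hq.1 q.2).ne')).pow 2).add (S.ctan.mul S.cXss)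

lemma energy (S : Strip t0 T R M a b X Xs Xt Xss Xtt) {s : ℝ} (hs : t0 < s) :
    (∫ θ in (-R)..R, ((Xs s θ / Real.cos (X s θ)) ^ 2 + (Xt s θ / Real.cos (X s θ)) ^ 2))
      ≤ - Yd R X Xs Xss s := by
  have cX := slice_cont S.cX hs
  have cXs := slice_cont S.cXs hs
  have cXt := slice_cont S.cXt hs
  have cXss := slice_cont S.cXss hs
  have cXtt := slice_cont S.cXtt hs
  have hcos : ∀ θ, Real.cos (X s θ) ≠ 0 := fun θ => (S.cosp hs θ).ne'
  have ct : Continuous fun θ => Real.tan (X s θ) :=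
    slice_cont (F := fun s θ => Real.tan (X s θ)) S.ctan hs
  have c1 : Continuous fun θ => Xs s θ / Real.cos (X s θ) := cXs.div (by fun_prop) hcos
  have c2 : Continuous fun θ => Xt s θ / Real.cos (X s θ) := cXt.div (by fun_prop) hcos
  have hR : -R ≤ R := (S.haR s).trans ((S.hab s).le.trans (S.hbR s))
  have z : ∫ θ in (-R)..R, ((Xt s θ / Real.cos (X s θ)) ^ 2 + Real.tan (X s θ) * Xtt s θ) = 0 := by
    rw [intervalIntegral.integral_eq_sub_of_hasDerivAt (fun θ _ => S.dtant hs θ)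
      (Continuous.intervalIntegrable (by fun_prop) _ _)]
    rw [S.van0 hs (θ := R) (fun h => absurd h.2 (not_lt.mpr (S.hbR s))),
      S.van0 hs (θ := -R) (fun h => absurd h.1 (not_lt.mpr (S.haR s)))]
    simp
  rw [Yd, neg_neg]
  rw [← add_zero (∫ θ in (-R)..R, ((Xs s θ / Real.cos (X s θ)) ^ 2 + Real.tan (X s θ) * Xss s θ)),
    ← z, ← intervalIntegral.integral_add (Continuous.intervalIntegrable (by fun_prop) _ _)
      (Continuous.intervalIntegrable (by fun_prop) _ _)]
  refine intervalIntegral.integral_mono_on hR (Continuous.intervalIntegrable (by fun_prop) _ _)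
    (Continuous.intervalIntegrable (by fun_prop) _ _) (fun θ _ => ?_)
  have htan : 0 ≤ Real.tan (X s θ) := Real.tan_nonneg_of_nonneg_of_le_pi_div_two (S.X0 s hs θ)
    ((S.XM s hs θ).trans S.hM.le)
  nlinarith [mul_nonneg htan (S.sub s hs θ)]

lemma restrict (S : Strip t0 T R M a b X Xs Xt Xss Xtt) {s : ℝ} {f : ℝ → ℝ}
    (hf : Continuous f) (h0 : ∀ θ, θ ∉ Ioo (a s) (b s) → f θ = 0) :
    ∫ θ in (-R)..R, f θ = ∫ θ in (a s)..(b s), f θ := by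
  rw [← intervalIntegral.integral_add_adjacent_intervals (hf.intervalIntegrable (-R) (a s))
    (hf.intervalIntegrable (a s) R),
    ← intervalIntegral.integral_add_adjacent_intervals (hf.intervalIntegrable (a s) (b s))
    (hf.intervalIntegrable (b s) R)]
  have e1 : ∫ θ in (-R)..(a s), f θ = 0 := by
    rw [intervalIntegral.integral_congr (g := fun _ => 0)]
    · simp
    · intro θ hθ
      rw [uIcc_of_le (S.haR s)] at hθ
      exact h0 θ (fun h => absurd h.1 (not_lt.mpr hθ.2))
  have e2 : ∫ θ in (b s)..R, f θ = 0 := by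
    rw [intervalIntegral.integral_congr (g := fun _ => 0)]
    · simp
    · intro θ hθ
      rw [uIcc_of_le (S.hbR s)] at hθ
      exact h0 θ (fun h => absurd h.2 (not_lt.mpr hθ.1))
  rw [e1, e2]; ring

lemma floor_gen (S : Strip t0 T R M a b X Xs Xt Xss Xtt) {s : ℝ} (hs : t0 < s)
    {V1 V2 V1s V2t : ℝ → ℝ → ℝ}
    (cK : ContinuousOn (fun q : ℝ × ℝ => gdi (X q.1 q.2) ^ 2 * V1 q.1 q.2) (Ici s ×ˢ univ))
    (cV1 : ContinuousOn (Function.uncurry V1) (Ioi s ×ˢ univ))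
    (cV2 : ContinuousOn (Function.uncurry V2) (Ioi s ×ˢ univ))
    (cV1s : ContinuousOn (Function.uncurry V1s) (Ioi s ×ˢ univ))
    (cV2t : ContinuousOn (Function.uncurry V2t) (Ioi s ×ˢ univ))
    (dV1 : ∀ r, s < r → ∀ θ, HasDerivAt (fun r => V1 r θ) (V1s r θ) r)
    (dV2 : ∀ r, s < r → ∀ θ, HasDerivAt (fun θ => V2 r θ) (V2t r θ) θ)
    (hV : ∀ r, s < r → ∀ θ, V1s r θ + V2t r θ + V1 r θ ^ 2 + V2 r θ ^ 2 ≤ 0) :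
    - (∫ θ in (-R)..R, gdi (X s θ) ^ 2 * V1 s θ) ≤ Y R X Xs s := by
  have hsub : Ioi s ×ˢ (univ : Set ℝ) ⊆ Ioi t0 ×ˢ univ :=
    prod_mono (Ioi_subset_Ioi hs.le) le_rfl
  have dps : ∀ r, s < r → ∀ θ, HasDerivAt (fun r => gdi (X r θ)) (Xs r θ / Real.cos (X r θ)) r := by
    intro r hr θ
    have := (gdi_deriv (S.cosp (hs.trans hr) θ)).comp r (S.dXs r (hs.trans hr) θ)
    exact this.congr_deriv (by ring)
  have dpt : ∀ r, s < r → ∀ θ, HasDerivAt (fun θ => gdi (X r θ)) (Xt r θ / Real.cos (X r θ)) θ := by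
    intro r hr θ
    have := (gdi_deriv (S.cosp (hs.trans hr) θ)).comp θ (S.dXt r (hs.trans hr) θ)
    exact this.congr_deriv (by ring)
  let K' : ℝ → ℝ → ℝ := fun r θ =>
    2 * gdi (X r θ) * (Xs r θ / Real.cos (X r θ)) * V1 r θ + gdi (X r θ) ^ 2 * V1s r θ
  have dK : ∀ r, s < r → ∀ θ, HasDerivAt (fun r => gdi (X r θ) ^ 2 * V1 r θ) (K' r θ) r := by
    intro r hr θ
    have := ((dps r hr θ).pow 2).mul (dV1 r hr θ)
    refine this.congr_deriv ?_
    simp [K']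
  have dK2 : ∀ r, s < r → ∀ θ, HasDerivAt (fun θ => gdi (X r θ) ^ 2 * V2 r θ)
      (2 * gdi (X r θ) * (Xt r θ / Real.cos (X r θ)) * V2 r θ + gdi (X r θ) ^ 2 * V2t r θ) θ := by
    intro r hr θ
    have := ((dpt r hr θ).pow 2).mul (dV2 r hr θ)
    refine this.congr_deriv ?_
    simp
  have cdiv : ContinuousOn (fun q : ℝ × ℝ => Xs q.1 q.2 / Real.cos (X q.1 q.2)) (Ioi t0 ×ˢ univ) :=
    S.cXs.div S.ccos (fun q hq => (S.cosp hq.1 q.2).ne')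
  have cK' : ContinuousOn (Function.uncurry K') (Ioi s ×ˢ univ) := by
    have h1 := S.cgdi.mono hsub
    have h2 := cdiv.mono hsub
    exact (((continuousOn_const.mul h1).mul h2).mul cV1).add ((h1.pow 2).mul cV1s)
  have hD : ∀ r, s < r → HasDerivAt (fun r => Y R X Xs r + ∫ θ in (-R)..R, gdi (X r θ) ^ 2 * V1 r θ)
      (Yd R X Xs Xss r + ∫ θ in (-R)..R, K' r θ) r := fun r hr =>
    (S.hY (hs.trans hr)).add (dui (F := fun r θ => gdi (X r θ) ^ 2 * V1 r θ) (F' := K') (-R) R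
      (cK.mono (prod_mono Ioi_subset_Ici_self le_rfl)) cK' dK hr)
  have hR : -R ≤ R := (S.haR s).trans ((S.hab s).le.trans (S.hbR s))
  have hneg : ∀ r, s < r → Yd R X Xs Xss r + ∫ θ in (-R)..R, K' r θ ≤ 0 := by
    intro r hr
    have hr0 := hs.trans hr
    have he := S.energy hr0
    have z : ∫ θ in (-R)..R, (2 * gdi (X r θ) * (Xt r θ / Real.cos (X r θ)) * V2 r θ + gdi (X r θ) ^ 2 * V2t r θ) = 0 := by
      rw [intervalIntegral.integral_eq_sub_of_hasDerivAt (fun θ _ => dK2 r hr θ)]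
      · rw [S.van0 hr0 (θ := R) (fun h => absurd h.2 (not_lt.mpr (S.hbR r))),
          S.van0 hr0 (θ := -R) (fun h => absurd h.1 (not_lt.mpr (S.haR r)))]
        simp [gdi_zero]
      · have c1 := slice_cont (F := fun s θ => gdi (X s θ)) S.cgdi hr0
        have c2 := slice_cont S.cXt hr0
        have c3 := slice_cont (F := fun s θ => Real.cos (X s θ)) S.ccos hr0
        have c4 := slice_cont cV2 hr
        have c5 := slice_cont cV2t hr
        have c6 := c2.div c3 (fun θ => (S.cosp hr0 θ).ne')
        exact Continuous.intervalIntegrable ((((continuous_const.mul c1).mul c6).mul c4).add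
          ((c1.pow 2).mul c5)) _ _
    have c1 := slice_cont (F := fun s θ => gdi (X s θ)) S.cgdi hr0
    have c2 := slice_cont S.cXt hr0
    have c2' := slice_cont S.cXs hr0
    have c3 := slice_cont (F := fun s θ => Real.cos (X s θ)) S.ccos hr0
    have c4 := slice_cont cV2 hr
    have c5 := slice_cont cV2t hr
    have c6 : Continuous fun θ => Xt r θ / Real.cos (X r θ) := c2.div c3 (fun θ => (S.cosp hr0 θ).ne')
    have c6' : Continuous fun θ => Xs r θ / Real.cos (X r θ) := c2'.div c3 (fun θ => (S.cosp hr0 θ).ne')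
    have c7 := slice_cont cK' hr
    have : ∫ θ in (-R)..R, (K' r θ + (2 * gdi (X r θ) * (Xt r θ / Real.cos (X r θ)) * V2 r θ + gdi (X r θ) ^ 2 * V2t r θ)) ≤
      ∫ θ in (-R)..R, ((Xs r θ / Real.cos (X r θ)) ^ 2 + (Xt r θ / Real.cos (X r θ)) ^ 2) := by
      refine intervalIntegral.integral_mono_on hR (Continuous.intervalIntegrable (by fun_prop) _ _)
        (Continuous.intervalIntegrable (by fun_prop) _ _) (fun θ _ => ?_)
      simp only [K']
      have := hV r hr θ
      set p := gdi (X r θ)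
      set u := Xs r θ / Real.cos (X r θ)
      set v := Xt r θ / Real.cos (X r θ)
      nlinarith [sq_nonneg (u - p * V1 r θ), sq_nonneg (v - p * V2 r θ),
        mul_nonneg (sq_nonneg p) (neg_nonneg.mpr this)]
    rw [intervalIntegral.integral_add (Continuous.intervalIntegrable (by fun_prop) _ _)
      (Continuous.intervalIntegrable (by fun_prop) _ _), z, add_zero] at this
    linarith
  have hanti := antitoneOn_of_deriv_nonpos (convex_Ici s)
    (f := fun r => Y R X Xs r + ∫ θ in (-R)..R, gdi (X r θ) ^ 2 * V1 r θ)
    (ContinuousOn.add (fun r hr => (S.hY (hs.trans_le hr)).continuousAt.continuousWithinAt)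
      (cont_int (F := fun r θ => gdi (X r θ) ^ 2 * V1 r θ) _ _ cK))
    (fun r hr => by
      rw [interior_Ici] at hr
      exact (hD r hr).differentiableAt.differentiableWithinAt)
    (fun r hr => by
      rw [interior_Ici] at hr
      rw [(hD r hr).deriv]
      exact hneg r hr)
  have hlast := hanti (mem_Ici.mpr le_rfl) (mem_Ici.mpr (le_max_left s T)) (le_max_left s T)
  have hX0 : ∀ θ, X (max s T) θ = 0 := S.vanT _ (hs.trans_le (le_max_left _ _)) (le_max_right _ _)
  simp only [Y, hX0, gdi_zero] at hlast
  simp at hlast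
  simp only [Y]
  linarith

end Strip


noncomputable def Sq (w : ℂ) : ℂ := Complex.exp (Complex.log (1 + w ^ 2) / 2)

def okW : Set ℂ := {w | 0 ≤ w.re ∧ 1 + w ^ 2 ∈ Complex.slitPlane}

lemma Sq_sq {w : ℂ} (hw : w ∈ okW) : Sq w ^ 2 = 1 + w ^ 2 := by
  rw [Sq, ← Complex.exp_nat_mul]
  push_cast
  rw [mul_div_cancel₀ _ (two_ne_zero), Complex.exp_log (Complex.slitPlane_ne_zero hw.2)]

lemma Sq_ne (w : ℂ) : Sq w ≠ 0 := Complex.exp_ne_zero _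

lemma Sq_re {w : ℂ} (hw : w ∈ okW) : 0 < (Sq w).re := by
  rw [Sq, Complex.exp_re]
  refine mul_pos (Real.exp_pos _) (Real.cos_pos_of_mem_Ioo ?_)
  have h1 := Complex.neg_pi_lt_arg (1 + w ^ 2)
  have h2 := Complex.arg_le_pi (1 + w ^ 2)
  have h3 : Complex.arg (1 + w ^ 2) ≠ Real.pi := (Complex.mem_slitPlane_iff_arg.mp hw.2).1
  have h4 := lt_of_le_of_ne h2 h3
  have e : (Complex.log (1 + w ^ 2) / 2).im = Complex.arg (1 + w ^ 2) / 2 := by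
    rw [show (2:ℂ) = ((2:ℝ):ℂ) by norm_num, Complex.div_ofReal_im, Complex.log_im]
  rw [e]
  constructor <;> linarith

noncomputable def hh (w : ℂ) : ℂ := Sq w - w
noncomputable def hh1 (w : ℂ) : ℂ := w / Sq w - 1
noncomputable def hh2 (w : ℂ) : ℂ := (Sq w - w * (w / Sq w)) / Sq w ^ 2

lemma Sq_deriv {w : ℂ} (hw : w ∈ okW) : HasDerivAt Sq (w / Sq w) w := by
  have h1 : HasDerivAt (fun w : ℂ => 1 + w ^ 2) (2 * w) w := by
    simpa using (hasDerivAt_pow 2 w).const_add 1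
  have := ((h1.clog hw.2).div_const 2).cexp
  refine this.congr_deriv ?_
  change Sq w * _ = _
  rw [← Sq_sq hw]
  have := Sq_ne w
  field_simp

lemma hh_deriv {w : ℂ} (hw : w ∈ okW) : HasDerivAt hh (hh1 w) w :=
  (Sq_deriv hw).sub (hasDerivAt_id' w)

lemma hh1_deriv {w : ℂ} (hw : w ∈ okW) : HasDerivAt hh1 (hh2 w) w := by
  have := ((hasDerivAt_id' w).div (Sq_deriv hw) (Sq_ne w)).sub_const 1
  refine this.congr_deriv ?_
  rw [hh2, one_mul]

lemma hh2_cont {w : ℂ} (hw : w ∈ okW) : ContinuousAt hh2 w := by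
  have hS := (Sq_deriv hw).continuousAt
  unfold hh2
  exact (hS.sub (continuousAt_id.mul (continuousAt_id.div hS (Sq_ne w)))).div (hS.pow 2)
    (pow_ne_zero 2 (Sq_ne w))

lemma hh_re {w : ℂ} (hw : w ∈ okW) : 0 < (hh w).re := by
  have h1 : 0 < (Sq w + w).re := by
    rw [Complex.add_re]; linarith [Sq_re hw, hw.1]
  have hne : Sq w + w ≠ 0 := fun h => by rw [h] at h1; simp at h1
  have : hh w = (Sq w + w)⁻¹ := by
    refine eq_inv_of_mul_eq_one_left ?_
    rw [hh]
    linear_combination Sq_sq hw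
  rw [this, Complex.inv_re]
  exact div_pos h1 (Complex.normSq_pos.mpr hne)

lemma okW_of_pos {w : ℂ} (hw : 0 < w.re) : w ∈ okW := by
  refine ⟨hw.le, ?_⟩
  rw [Complex.mem_slitPlane_iff]
  by_cases h : w.im = 0
  · left
    simp [pow_two, h]
    positivity
  · right
    simp [pow_two]
    intro h'
    rcases mul_eq_zero.mp (by linarith : w.re * w.im = 0) with h1 | h1
    · linarith
    · exact h h1

section VV
variable (s ℓ mid : ℝ)

noncomputable def wf (r θ : ℝ) : ℂ := (((r - s) / ℓ : ℝ) : ℂ) + (((θ - mid) / ℓ : ℝ) : ℂ) * Complex.I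

lemma wf_re (r θ : ℝ) : (wf s ℓ mid r θ).re = (r - s) / ℓ := by simp [wf]
lemma wf_im (r θ : ℝ) : (wf s ℓ mid r θ).im = (θ - mid) / ℓ := by simp [wf]

lemma wf_ds (r θ : ℝ) : HasDerivAt (fun r => wf s ℓ mid r θ) ((1 / ℓ : ℝ) : ℂ) r := by
  unfold wf
  exact ((((hasDerivAt_id' r).sub_const s).div_const ℓ).ofReal_comp).add_const _

lemma wf_dt (r θ : ℝ) : HasDerivAt (fun θ => wf s ℓ mid r θ) (((1 / ℓ : ℝ) : ℂ) * Complex.I) θ := by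
  unfold wf
  exact (((((hasDerivAt_id' θ).sub_const mid).div_const ℓ).ofReal_comp).mul_const _).const_add _

lemma wf_cont : Continuous fun q : ℝ × ℝ => wf s ℓ mid q.1 q.2 := by
  unfold wf; fun_prop

lemma re_deriv {f : ℝ → ℂ} {f' : ℂ} {x : ℝ} (h : HasDerivAt f f' x) :
    HasDerivAt (fun x => (f x).re) f'.re x :=
  Complex.reCLM.hasFDerivAt.comp_hasDerivAt x h

lemma im_deriv {f : ℝ → ℂ} {f' : ℂ} {x : ℝ} (h : HasDerivAt f f' x) :
    HasDerivAt (fun x => (f x).im) f'.im x :=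
  Complex.imCLM.hasFDerivAt.comp_hasDerivAt x h

noncomputable def V1 (r θ : ℝ) : ℝ := (hh1 (wf s ℓ mid r θ)).re / (ℓ * (hh (wf s ℓ mid r θ)).re)
noncomputable def V2 (r θ : ℝ) : ℝ := - (hh1 (wf s ℓ mid r θ)).im / (ℓ * (hh (wf s ℓ mid r θ)).re)
noncomputable def V1s (r θ : ℝ) : ℝ :=
  ((hh2 (wf s ℓ mid r θ)).re * (hh (wf s ℓ mid r θ)).re - (hh1 (wf s ℓ mid r θ)).re ^ 2)
    / (ℓ * (hh (wf s ℓ mid r θ)).re) ^ 2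
noncomputable def V2t (r θ : ℝ) : ℝ :=
  (-(hh2 (wf s ℓ mid r θ)).re * (hh (wf s ℓ mid r θ)).re - (hh1 (wf s ℓ mid r θ)).im ^ 2)
    / (ℓ * (hh (wf s ℓ mid r θ)).re) ^ 2

variable {s ℓ mid}

lemma V1_at {r θ : ℝ} (hℓ : 0 < ℓ) (hw : wf s ℓ mid r θ ∈ okW) :
    ContinuousAt (fun q : ℝ × ℝ => V1 s ℓ mid q.1 q.2) (r, θ) := by
  have hp := hh_re hw
  have c0 : ContinuousAt (fun q : ℝ × ℝ => wf s ℓ mid q.1 q.2) (r, θ) := (wf_cont s ℓ mid).continuousAt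
  have c1 : ContinuousAt (fun q : ℝ × ℝ => hh1 (wf s ℓ mid q.1 q.2)) (r, θ) :=
    ContinuousAt.comp (g := hh1) (hh1_deriv hw).continuousAt c0
  have c2 : ContinuousAt (fun q : ℝ × ℝ => hh (wf s ℓ mid q.1 q.2)) (r, θ) :=
    ContinuousAt.comp (g := hh) (hh_deriv hw).continuousAt c0
  exact (Complex.continuous_re.continuousAt.comp c1).div
    (continuousAt_const.mul (Complex.continuous_re.continuousAt.comp c2)) (by positivity)

lemma V_at {r θ : ℝ} (hℓ : 0 < ℓ) (hw : wf s ℓ mid r θ ∈ okW) :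
    ContinuousAt (fun q : ℝ × ℝ => V2 s ℓ mid q.1 q.2) (r, θ) ∧ 
    ContinuousAt (fun q : ℝ × ℝ => V1s s ℓ mid q.1 q.2) (r, θ) ∧ 
    ContinuousAt (fun q : ℝ × ℝ => V2t s ℓ mid q.1 q.2) (r, θ) := by
  have hp := hh_re hw
  have c0 : ContinuousAt (fun q : ℝ × ℝ => wf s ℓ mid q.1 q.2) (r, θ) := (wf_cont s ℓ mid).continuousAt
  have c1 : ContinuousAt (fun q : ℝ × ℝ => hh1 (wf s ℓ mid q.1 q.2)) (r, θ) :=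
    ContinuousAt.comp (g := hh1) (hh1_deriv hw).continuousAt c0
  have c2 : ContinuousAt (fun q : ℝ × ℝ => hh (wf s ℓ mid q.1 q.2)) (r, θ) :=
    ContinuousAt.comp (g := hh) (hh_deriv hw).continuousAt c0
  have c3 : ContinuousAt (fun q : ℝ × ℝ => hh2 (wf s ℓ mid q.1 q.2)) (r, θ) :=
    ContinuousAt.comp (g := hh2) (hh2_cont hw) c0
  have c1r : ContinuousAt (fun q : ℝ × ℝ => (hh1 (wf s ℓ mid q.1 q.2)).re) (r, θ) :=
    Complex.continuous_re.continuousAt.comp c1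
  have c1i : ContinuousAt (fun q : ℝ × ℝ => (hh1 (wf s ℓ mid q.1 q.2)).im) (r, θ) :=
    Complex.continuous_im.continuousAt.comp c1
  have c2r : ContinuousAt (fun q : ℝ × ℝ => (hh (wf s ℓ mid q.1 q.2)).re) (r, θ) :=
    Complex.continuous_re.continuousAt.comp c2
  have c3r : ContinuousAt (fun q : ℝ × ℝ => (hh2 (wf s ℓ mid q.1 q.2)).re) (r, θ) :=
    Complex.continuous_re.continuousAt.comp c3
  refine ⟨c1i.neg.div (continuousAt_const.mul c2r) (by positivity),
    ((c3r.mul c2r).sub (c1r.pow 2)).div ((continuousAt_const.mul c2r).pow 2) (by positivity),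
    ((c3r.neg.mul c2r).sub (c1i.pow 2)).div ((continuousAt_const.mul c2r).pow 2) (by positivity)⟩

lemma V1_deriv {r θ : ℝ} (hℓ : 0 < ℓ) (hw : wf s ℓ mid r θ ∈ okW) :
    HasDerivAt (fun r => V1 s ℓ mid r θ) (V1s s ℓ mid r θ) r := by
  have hp := hh_re hw
  have d1 := re_deriv ((hh1_deriv hw).comp r (wf_ds s ℓ mid r θ))
  have d2 := re_deriv ((hh_deriv hw).comp r (wf_ds s ℓ mid r θ))
  rw [Complex.re_mul_ofReal] at d1 d2
  have := d1.div (d2.const_mul ℓ) (by simp only [Function.comp]; positivity)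
  refine this.congr_deriv ?_
  simp only [V1s, Function.comp]
  field_simp

lemma V2_deriv {r θ : ℝ} (hℓ : 0 < ℓ) (hw : wf s ℓ mid r θ ∈ okW) :
    HasDerivAt (fun θ => V2 s ℓ mid r θ) (V2t s ℓ mid r θ) θ := by
  have hp := hh_re hw
  have d1 := im_deriv ((hh1_deriv hw).comp θ (wf_dt s ℓ mid r θ))
  have d2 := re_deriv ((hh_deriv hw).comp θ (wf_dt s ℓ mid r θ))
  have e1 : ∀ z : ℂ, (z * (((1 / ℓ : ℝ) : ℂ) * Complex.I)).im = z.re / ℓ := by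
    intro z; rw [← mul_assoc, Complex.mul_I_im, Complex.re_mul_ofReal]; ring
  have e2 : ∀ z : ℂ, (z * (((1 / ℓ : ℝ) : ℂ) * Complex.I)).re = - z.im / ℓ := by
    intro z; rw [← mul_assoc, Complex.mul_I_re, Complex.im_mul_ofReal]; ring
  rw [e1] at d1
  rw [e2] at d2
  have := d1.neg.div (d2.const_mul ℓ) (by simp only [Function.comp]; positivity)
  refine this.congr_deriv ?_
  simp only [V2t, Function.comp]
  field_simp
  simp only [Pi.neg_apply]
  ring

lemma V_ric {r θ : ℝ} (hℓ : 0 < ℓ) (hw : wf s ℓ mid r θ ∈ okW) :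
    V1s s ℓ mid r θ + V2t s ℓ mid r θ + V1 s ℓ mid r θ ^ 2 + V2 s ℓ mid r θ ^ 2 ≤ 0 := by
  have hp := hh_re hw
  refine le_of_eq ?_
  simp only [V1s, V2t, V1, V2]
  field_simp
  ring

lemma wf_ok {r θ : ℝ} (hℓ : 0 < ℓ) (hr : s < r) : wf s ℓ mid r θ ∈ okW := by
  apply okW_of_pos
  rw [wf_re]
  exact div_pos (by linarith) hℓ

lemma wf_edge {θ : ℝ} (hℓ : 0 < ℓ) (h : |θ - mid| < ℓ) :
    wf s ℓ mid s θ ∈ okW ∧ V1 s ℓ mid s θ ≤ - (1 / ℓ) := by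
  set v := (θ - mid) / ℓ with hv
  have hv1 : |v| < 1 := by rw [hv, abs_div, abs_of_pos hℓ, div_lt_one hℓ]; exact h
  have hv2 : 0 < 1 - v ^ 2 := by
    have := (sq_lt_one_iff_abs_lt_one v).mpr hv1
    linarith
  have hw : wf s ℓ mid s θ = (v : ℂ) * Complex.I := by simp [wf, hv]
  have e : 1 + (wf s ℓ mid s θ) ^ 2 = ((1 - v ^ 2 : ℝ) : ℂ) := by
    rw [hw, mul_pow, Complex.I_sq]; push_cast; ring
  have hok : wf s ℓ mid s θ ∈ okW := by
    refine ⟨by rw [wf_re]; simp, ?_⟩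
    rw [e]; exact Complex.ofReal_mem_slitPlane.mpr hv2
  refine ⟨hok, ?_⟩
  set σ := Real.exp (Real.log (1 - v ^ 2) / 2) with hσ
  have hσp : 0 < σ := Real.exp_pos _
  have hσ1 : σ ≤ 1 := by
    rw [hσ]; apply Real.exp_le_one_iff.mpr
    have := Real.log_nonpos hv2.le (by nlinarith [sq_nonneg v])
    linarith
  have hS : Sq (wf s ℓ mid s θ) = (σ : ℂ) := by
    rw [Sq, e, ← Complex.ofReal_log hv2.le, hσ]
    push_cast; rfl
  have e1 : (hh (wf s ℓ mid s θ)).re = σ := by rw [hh, hS, hw]; simp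
  have e2 : (hh1 (wf s ℓ mid s θ)).re = -1 := by
    rw [hh1, hS, hw, Complex.sub_re, Complex.div_ofReal_re]; simp
  rw [V1, e1, e2, neg_div, neg_le_neg_iff]
  gcongr
  nlinarith

end VV

namespace Strip
variable {t0 T R M : ℝ} {a b : ℝ → ℝ} {X Xs Xt Xss Xtt : ℝ → ℝ → ℝ}

lemma floor (S : Strip t0 T R M a b X Xs Xt Xss Xtt) {s : ℝ} (hs : t0 < s) :
    2 * (∫ θ in (a s)..(b s), gdi (X s θ) ^ 2) ≤ (b s - a s) * Y R X Xs s := by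
  set ℓ := (b s - a s) / 2 with hℓ
  set mid := (a s + b s) / 2 with hmid
  have hl0 : 0 < ℓ := by have := S.hab s; simp only [hℓ]; linarith
  have hmem : ∀ θ ∈ Ioo (a s) (b s), |θ - mid| < ℓ := by
    intro θ hθ
    rw [abs_lt, hℓ, hmid]
    constructor <;> linarith [hθ.1, hθ.2]
  have hcK : ContinuousOn (fun q : ℝ × ℝ => gdi (X q.1 q.2) ^ 2 * V1 s ℓ mid q.1 q.2) (Ici s ×ˢ univ) := by
    rintro ⟨r, θ⟩ ⟨hr, -⟩
    have hr : s ≤ r := hr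
    by_cases hw : wf s ℓ mid r θ ∈ okW
    · have h1 : ContinuousWithinAt (fun q : ℝ × ℝ => gdi (X q.1 q.2)) (Ici s ×ˢ univ) (r, θ) :=
        (S.cgdi (r, θ) ⟨hs.trans_le hr, mem_univ _⟩).mono
          (prod_mono (fun x hx => hs.trans_le hx) le_rfl)
      exact (h1.pow 2).mul (V1_at hl0 hw).continuousWithinAt
    · have hrs : r = s := by
        by_contra hne
        exact hw (wf_ok hl0 (lt_of_le_of_ne hr (Ne.symm hne)))
      subst hrs
      have hθ : θ ∉ Ioo (a r) (b r) := fun hθ => hw (wf_edge hl0 (hmem θ hθ)).1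
      have hv := S.van r hs θ hθ
      have : (fun q : ℝ × ℝ => gdi (X q.1 q.2) ^ 2 * V1 r ℓ mid q.1 q.2) =ᶠ[nhds (r, θ)] fun _ => 0 := by
        filter_upwards [hv] with q hq
        rw [hq, gdi_zero]; ring
      exact (continuousAt_const.congr this.symm).continuousWithinAt
  have hop : ∀ q : ℝ × ℝ, q ∈ Ioi s ×ˢ (univ : Set ℝ) → wf s ℓ mid q.1 q.2 ∈ okW := fun q hq => wf_ok hl0 hq.1
  have key := S.floor_gen hs (V1 := V1 s ℓ mid) (V2 := V2 s ℓ mid) (V1s := V1s s ℓ mid) (V2t := V2t s ℓ mid)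
    hcK (fun q hq => (V1_at hl0 (hop q hq)).continuousWithinAt)
    (fun q hq => (V_at hl0 (hop q hq)).1.continuousWithinAt)
    (fun q hq => (V_at hl0 (hop q hq)).2.1.continuousWithinAt)
    (fun q hq => (V_at hl0 (hop q hq)).2.2.continuousWithinAt)
    (fun r hr θ => V1_deriv hl0 (wf_ok hl0 hr)) (fun r hr θ => V2_deriv hl0 (wf_ok hl0 hr))
    (fun r hr θ => V_ric hl0 (wf_ok hl0 hr))
  have hsl : Continuous fun θ => gdi (X s θ) ^ 2 * V1 s ℓ mid s θ := by
    rw [← continuousOn_univ]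
    exact hcK.comp (f := fun θ => (s, θ)) (by fun_prop) (fun θ _ => ⟨mem_Ici.mpr le_rfl, mem_univ _⟩)
  have hg : Continuous fun θ => gdi (X s θ) := slice_cont (F := fun s θ => gdi (X s θ)) S.cgdi hs
  have e : ∫ θ in (-R)..R, gdi (X s θ) ^ 2 * V1 s ℓ mid s θ = ∫ θ in (a s)..(b s), gdi (X s θ) ^ 2 * V1 s ℓ mid s θ :=
    S.restrict (s := s) hsl (fun θ hθ => by rw [S.van0 hs hθ, gdi_zero]; ring)
  rw [e] at key
  have hmono : ∫ θ in (a s)..(b s), gdi (X s θ) ^ 2 * V1 s ℓ mid s θ ≤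
      ∫ θ in (a s)..(b s), gdi (X s θ) ^ 2 * (-(1 / ℓ)) := by
    refine intervalIntegral.integral_mono_on (S.hab s).le (hsl.intervalIntegrable _ _)
      (Continuous.intervalIntegrable (by fun_prop) _ _) (fun θ _ => ?_)
    by_cases hθ : θ ∈ Ioo (a s) (b s)
    · exact mul_le_mul_of_nonneg_left (wf_edge hl0 (hmem θ hθ)).2 (sq_nonneg _)
    · rw [S.van0 hs hθ, gdi_zero]; simp
  rw [intervalIntegral.integral_mul_const] at hmono
  have : (∫ θ in (a s)..(b s), gdi (X s θ) ^ 2) * (1 / ℓ) ≤ Y R X Xs s := by linarith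
  rw [mul_one_div, div_le_iff₀ hl0] at this
  rw [hℓ] at this
  linarith

end Strip


lemma second_deriv_nonpos {g g' : ℝ → ℝ} {g2 x : ℝ} (hg : ∀ᶠ y in nhds x, HasDerivAt g (g' y) y)
    (hg' : HasDerivAt g' g2 x) (hm : IsLocalMax g x) : g2 ≤ 0 := by
  by_contra hcon
  push Not at hcon
  have e1 : deriv g =ᶠ[nhds x] g' := hg.mono fun y hy => hy.deriv
  have e2 : deriv (deriv g) x = g2 := by rw [e1.deriv_eq, hg'.deriv]
  have hmin : IsLocalMin g x := isLocalMin_of_deriv_deriv_pos (by rw [e2]; exact hcon)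
    hm.deriv_eq_zero hg.self_of_nhds.continuousAt
  have hc : g =ᶠ[nhds x] fun _ => g x := by
    filter_upwards [hm, hmin] with y h1 h2
    exact le_antisymm h1 h2
  have : deriv g =ᶠ[nhds x] fun _ => 0 := by
    have := hc.deriv
    simpa using this
  have e3 := this.deriv_eq
  rw [e2] at e3
  simp at e3
  linarith

lemma alg1 {A B n I L Y : ℝ} (hA : 0 ≤ A) (hB : 0 ≤ B) (hn : 0 ≤ n) (hI : 0 < I) (hL : L = n + I)
    (h1 : Real.pi ^ 2 * n ≤ L * A * I) (h2 : Y ^ 2 ≤ n * B) :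
    Y ^ 2 + 2 * Real.pi * Y ≤ L * (A + B) := by
  have hLp : 0 < L := by linarith
  rcases hn.eq_or_lt with h | h
  · rw [← h] at h2
    have : Y = 0 := by nlinarith
    rw [this]; have : 0 ≤ L * (A + B) := by positivity
    linarith
  · have e1 : Real.pi ^ 2 * n / I ≤ L * A := by rw [div_le_iff₀ hI]; exact h1
    have e2 : Y ^ 2 / n ≤ B := by rw [div_le_iff₀ h]; linarith
    have e3 : L * (Y ^ 2 / n) ≤ L * B := by gcongr
    have e4 : L * (Y ^ 2 / n) = Y ^ 2 + Y ^ 2 * I / n := by rw [hL]; field_simp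
    have e5 : 2 * Real.pi * Y ≤ Real.pi ^ 2 * n / I + Y ^ 2 * I / n := by
      rw [div_add_div _ _ hI.ne' h.ne', le_div_iff₀ (by positivity)]
      nlinarith [sq_nonneg (Real.pi * n - Y * I)]
    linarith

namespace Strip
variable {t0 T R M : ℝ} {a b : ℝ → ℝ} {X Xs Xt Xss Xtt : ℝ → ℝ → ℝ}

lemma maxp (S : Strip t0 T R M a b X Xs Xt Xss Xtt) {s t : ℝ} (hs : t0 < s) (hst : s ≤ t) {θ₀ : ℝ}
    (hx : 0 < X t θ₀) : ∃ θ ∈ Ioo (a s) (b s), X t θ₀ ≤ X s θ := by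
  by_contra hcon
  push Not at hcon
  have hlt : ∀ θ, X s θ < X t θ₀ := by
    intro θ
    by_cases hθ : θ ∈ Ioo (a s) (b s)
    · exact hcon θ hθ
    · rw [S.van0 hs hθ]; exact hx
  have ht0 := hs.trans_le hst
  have hθ₀ : θ₀ ∈ Ioo (a t) (b t) := by
    by_contra h; rw [S.van0 ht0 h] at hx; exact lt_irrefl _ hx
  set T' := max T t + 1 with hT'
  have htT : t < T' := by have := le_max_right T t; simp only [hT']; linarith
  have hTT : T ≤ T' := by have := le_max_left T t; simp only [hT']; linarith
  have hsT : s < T' := hst.trans_lt htT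
  set η := X t θ₀ / (2 * (T' - s) ^ 2) with hη
  have hpos : 0 < (T' - s) ^ 2 := by have : 0 < T' - s := by linarith
                                     positivity
  have hη0 : 0 < η := by positivity
  have hηT : η * (T' - s) ^ 2 < X t θ₀ := by
    have : η * (T' - s) ^ 2 = X t θ₀ / 2 := by
      have h0 : T' - s ≠ 0 := (sub_pos.mpr hsT).ne'
      rw [hη]; field_simp
    linarith
  have hK : IsCompact (Icc s T' ×ˢ Icc (-R) R) := isCompact_Icc.prod isCompact_Icc
  have hsub : Icc s T' ×ˢ Icc (-R) R ⊆ Ioi t0 ×ˢ univ :=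
    prod_mono (fun x hx => hs.trans_le hx.1) (subset_univ _)
  have hmem : (t, θ₀) ∈ Icc s T' ×ˢ Icc (-R) R :=
    ⟨⟨hst, htT.le⟩, ⟨(S.haR t).trans hθ₀.1.le, hθ₀.2.le.trans (S.hbR t)⟩⟩
  obtain ⟨⟨σ, θ⟩, hq, hmax⟩ := hK.exists_isMaxOn ⟨_, hmem⟩
    (f := fun q : ℝ × ℝ => X q.1 q.2 + η * (q.1 - s) ^ 2)
    (ContinuousOn.add (S.cX.mono hsub) (by fun_prop))
  have hge := hmax hmem
  simp only [mem_ofPred_eq] at hge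
  have hge' : X t θ₀ ≤ X σ θ + η * (σ - s) ^ 2 := by
    have : 0 ≤ η * (t - s) ^ 2 := by positivity
    linarith
  have hσ0 : t0 < σ := hs.trans_le hq.1.1
  have hσle : η * (σ - s) ^ 2 ≤ η * (T' - s) ^ 2 := by
    have h1 : 0 ≤ σ - s := by have := hq.1.1; simp only at this; linarith
    have h2 : σ - s ≤ T' - s := by have := hq.1.2; simp only at this; linarith
    gcongr
  have hXpos : X σ θ ≠ 0 := by
    intro h; rw [h] at hge'; linarith
  have hσs : s < σ := by
    refine lt_of_le_of_ne hq.1.1 (fun h => ?_)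
    rw [← h] at hge'
    simp at hge'
    linarith [hlt θ]
  have hσT : σ < T' := by
    refine lt_of_le_of_ne hq.1.2 (fun h => hXpos ?_)
    exact S.vanT σ hσ0 (by rw [h]; exact hTT) θ
  have hθ : θ ∈ Ioo (a σ) (b σ) := by
    by_contra h; exact hXpos (S.van0 hσ0 h)
  have hθR : θ ∈ Ioo (-R) R := ⟨(S.haR σ).trans_lt hθ.1, hθ.2.trans_le (S.hbR σ)⟩
  have l1 : IsLocalMax (fun r => X r θ + η * (r - s) ^ 2) σ := by
    filter_upwards [Ioo_mem_nhds hσs hσT] with r hr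
    exact hmax (⟨⟨hr.1.le, hr.2.le⟩, hq.2⟩ : (r, θ) ∈ Icc s T' ×ˢ Icc (-R) R)
  have l2 : IsLocalMax (fun θ => X σ θ) θ := by
    filter_upwards [Ioo_mem_nhds hθR.1 hθR.2] with r hr
    have := hmax (⟨hq.1, ⟨hr.1.le, hr.2.le⟩⟩ : (σ, r) ∈ Icc s T' ×ˢ Icc (-R) R)
    simp only [mem_ofPred_eq] at this
    linarith
  have n1 := second_deriv_nonpos (g' := fun r => Xs r θ + η * (2 * (r - s))) (g2 := Xss σ θ + η * 2)
    (by
      filter_upwards [lt_mem_nhds hσ0] with r hr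
      have := (S.dXs r hr θ).add ((((hasDerivAt_id' r).sub_const s).pow 2).const_mul η)
      refine this.congr_deriv ?_
      simp)
    (by
      have := (S.dXss σ hσ0 θ).add ((((hasDerivAt_id' σ).sub_const s).const_mul 2).const_mul η)
      refine this.congr_deriv ?_
      ring) l1
  have n2 := second_deriv_nonpos (g' := fun r => Xt σ r) (g2 := Xtt σ θ)
    (Filter.Eventually.of_forall fun r => S.dXt σ hσ0 r) (S.dXtt σ hσ0 θ) l2
  linarith [S.sub σ hσ0 θ]

lemma slice (S : Strip t0 T R M a b X Xs Xt Xss Xtt) {s t : ℝ} (hs : t0 < s) (hst : s ≤ t) {θ₀ : ℝ}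
    (hx : 0 < X t θ₀) :
    0 < Y R X Xs s ∧
    Y R X Xs s ^ 2 + 2 * Real.pi * Y R X Xs s ≤ - ((b s - a s) * Yd R X Xs Xss s) ∧
    2 * Y R X Xs s + 4 * gdi (X t θ₀) ^ 2 ≤ - ((b s - a s) * Yd R X Xs Xss s) ∧
    2 * Y R X Xs s + 2 * (gdi (X t θ₀) ^ 2) ^ 2 / Y R X Xs s ≤ - ((b s - a s) * Yd R X Xs Xss s) := by
  obtain ⟨m, hm, hxm⟩ := S.maxp hs hst hx
  have hab := S.hab s
  have ht0 := hs.trans_le hst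
  have cX := slice_cont S.cX hs
  have cXs := slice_cont S.cXs hs
  have cXt := slice_cont S.cXt hs
  have hcos : ∀ θ, Real.cos (X s θ) ≠ 0 := fun θ => (S.cosp hs θ).ne'
  have ct : Continuous fun θ => Real.tan (X s θ) :=
    slice_cont (F := fun s θ => Real.tan (X s θ)) S.ctan hs
  have c1 : Continuous fun θ => Xs s θ / Real.cos (X s θ) := cXs.div (by fun_prop) hcos
  have c2 : Continuous fun θ => Xt s θ / Real.cos (X s θ) := cXt.div (by fun_prop) hcos
  have cg : Continuous fun θ => gdi (X s θ) := slice_cont (F := fun s θ => gdi (X s θ)) S.cgdi hs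
  have va : X s (a s) = 0 := S.van0 hs (fun h => lt_irrefl _ h.1)
  have vb : X s (b s) = 0 := S.van0 hs (fun h => lt_irrefl _ h.2)
  set q := gdi (X t θ₀) with hq
  have hXt : X t θ₀ < Real.pi / 2 := (S.XM t ht0 θ₀).trans_lt S.hM
  have hXm : X s m < Real.pi / 2 := (S.XM s hs m).trans_lt S.hM
  have hq0 : 0 < q := hx.trans_le (le_gdi hx.le hXt)
  have hqm : q ≤ gdi (X s m) := gdi_mono hx.le hxm hXm
  set A := ∫ θ in (a s)..(b s), (Xt s θ / Real.cos (X s θ)) ^ 2 with hA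
  set B := ∫ θ in (a s)..(b s), (Xs s θ / Real.cos (X s θ)) ^ 2 with hB
  set P := ∫ θ in (a s)..(b s), gdi (X s θ) ^ 2 with hP
  set n := ∫ θ in (a s)..(b s), Real.sin (X s θ) ^ 2 with hn
  set I := ∫ θ in (a s)..(b s), Real.cos (X s θ) ^ 2 with hI
  set y := Y R X Xs s with hy
  set L := b s - a s with hL
  have hLp : 0 < L := by simp only [hL]; linarith
  have hA0 : 0 ≤ A := intervalIntegral.integral_nonneg hab.le (fun x _ => sq_nonneg _)
  have hB0 : 0 ≤ B := intervalIntegral.integral_nonneg hab.le (fun x _ => sq_nonneg _)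
  have hn0 : 0 ≤ n := intervalIntegral.integral_nonneg hab.le (fun x _ => sq_nonneg _)
  have hPp : 0 < P := intervalIntegral.integral_pos hab (cg.pow 2).continuousOn (fun x _ => sq_nonneg _)
    ⟨m, ⟨hm.1.le, hm.2.le⟩, by have := hq0.trans_le hqm; positivity⟩
  have hIp : 0 < I := intervalIntegral.integral_pos hab (by fun_prop) (fun x _ => sq_nonneg _)
    ⟨m, ⟨hm.1.le, hm.2.le⟩, by have := S.cosp hs m; positivity⟩
  have hLnI : L = n + I := by
    rw [hn, hI, ← intervalIntegral.integral_add (Continuous.intervalIntegrable (by fun_prop) _ _)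
      (Continuous.intervalIntegrable (by fun_prop) _ _)]
    simp [hL]
  have hnP : n ≤ P := by
    refine intervalIntegral.integral_mono_on hab.le (Continuous.intervalIntegrable (by fun_prop) _ _)
      (Continuous.intervalIntegrable (by fun_prop) _ _) (fun θ _ => ?_)
    have h0 := S.X0 s hs θ
    have h1 : X s θ < Real.pi / 2 := (S.XM s hs θ).trans_lt S.hM
    have h2 := le_gdi h0 h1
    have h3 := Real.sin_le h0
    have h4 := Real.sin_nonneg_of_nonneg_of_le_pi h0 (by linarith)
    have h5 := h3.trans h2
    gcongr
  have hfl : 2 * P ≤ L * y := S.floor hs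
  have hyp : 0 < y := by
    by_contra h
    push Not at h
    nlinarith
  have hen : A + B ≤ - Yd R X Xs Xss s := by
    refine le_trans ?_ (S.energy hs)
    rw [hA, hB, ← intervalIntegral.integral_add (Continuous.intervalIntegrable (by fun_prop) _ _)
      (Continuous.intervalIntegrable (by fun_prop) _ _)]
    have : ∫ θ in (a s)..(b s), ((Xt s θ / Real.cos (X s θ)) ^ 2 + (Xs s θ / Real.cos (X s θ)) ^ 2)
       = ∫ θ in (a s)..(b s), ((Xs s θ / Real.cos (X s θ)) ^ 2 + (Xt s θ / Real.cos (X s θ)) ^ 2) := by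
      congr 1; ext θ; ring
    rw [this]
    refine intervalIntegral.integral_mono_interval (S.haR s) hab.le (S.hbR s)
      (Filter.Eventually.of_forall fun θ => by simp only [Pi.zero_apply]; positivity)
      (Continuous.intervalIntegrable (by fun_prop) _ _)
  have hCS : y ^ 2 ≤ n * B := by
    have : y = - ∫ θ in (a s)..(b s), Real.sin (X s θ) * (Xs s θ / Real.cos (X s θ)) := by
      rw [hy, Y, S.restrict (s := s) (f := fun θ => Real.tan (X s θ) * Xs s θ) (ct.mul cXs) (fun θ hθ => by rw [S.van0 hs hθ]; simp)]
      congr 2; ext θ; rw [Real.tan_eq_sin_div_cos]; ring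
    rw [this, neg_sq]
    exact cs_int hab.le (by fun_prop) c1
  have hkey : Real.pi ^ 2 * n ≤ L * A * I :=
    key1D hab (S.dXt s hs) cXt va vb (S.X0 s hs) S.hM (S.XM s hs)
  have hdg : ∀ θ, HasDerivAt (fun θ => gdi (X s θ)) (Xt s θ / Real.cos (X s θ)) θ := by
    intro θ
    exact ((gdi_deriv (S.cosp hs θ)).comp θ (S.dXt s hs θ)).congr_deriv (by ring)
  have ht1 : 4 * q ^ 2 ≤ L * A := by
    have := tent1 hab ⟨hm.1.le, hm.2.le⟩ hdg c2 (by rw [va, gdi_zero]) (by rw [vb, gdi_zero])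
    have h2 : 4 * q ^ 2 ≤ 4 * gdi (X s m) ^ 2 := by gcongr
    exact h2.trans this
  have ht2 : q ^ 4 ≤ P * A := by
    have := tent2 ⟨hm.1.le, hm.2.le⟩ hdg c2 (by rw [va, gdi_zero]) (by rw [vb, gdi_zero]) hPp
    have h2 : q ^ 4 ≤ gdi (X s m) ^ 4 := by gcongr
    exact h2.trans this
  have hLe : L * (A + B) ≤ - (L * Yd R X Xs Xss s) := by
    have := mul_le_mul_of_nonneg_left hen hLp.le
    linarith
  have hLB : 2 * y ≤ L * B := by
    have h1 : y ^ 2 ≤ P * B := hCS.trans (by gcongr)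
    have h2 : 2 * y * y ≤ L * B * y := by nlinarith
    exact le_of_mul_le_mul_right h2 hyp
  have hLA : 2 * (q ^ 2) ^ 2 / y ≤ L * A := by
    rw [div_le_iff₀ hyp]
    nlinarith
  refine ⟨hyp, (alg1 hA0 hB0 hn0 hIp hLnI hkey hCS).trans hLe, ?_, ?_⟩
  · linarith
  · linarith

lemma concl (S : Strip t0 T R M a b X Xs Xt Xss Xtt) {s t : ℝ} (hs : t0 < s) (hst : s ≤ t) (θ₀ : ℝ)
    {Lam : ℝ → ℝ} (hLam : ∀ r ∈ Icc s t, HasDerivAt Lam (1 / (b r - a r)) r) :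
    X t θ₀ ≤ 4 * Real.exp (-Real.pi * (Lam t - Lam s)) := by
  have ht0 := hs.trans_le hst
  rcases (S.X0 t ht0 θ₀).eq_or_lt with h | hx
  · rw [← h]; positivity
  have hXt : X t θ₀ < Real.pi / 2 := (S.XM t ht0 θ₀).trans_lt S.hM
  have hq0 : 0 < gdi (X t θ₀) := hx.trans_le (le_gdi hx.le hXt)
  refine final_num hx hXt ?_
  have hr0 : ∀ r ∈ Icc s t, t0 < r := fun r hr => hs.trans_le hr.1
  exact ode_main (L := fun r => b r - a r) (Y := Y R X Xs) (Y' := Yd R X Xs Xss) hst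
    (by positivity) (fun r hr => S.hY (hr0 r hr))
    (fun r hr => (S.slice (hr0 r hr) hr.2 hx).1) (fun r _ => sub_pos.mpr (S.hab r)) hLam
    (fun r hr => (S.slice (hr0 r hr) hr.2 hx).2.1)
    (fun r hr => (S.slice (hr0 r hr) hr.2 hx).2.2.1)
    (fun r hr => (S.slice (hr0 r hr) hr.2 hx).2.2.2)

end Strip


theorem hasDeriv_maxcomp {F G : ℝ → ℝ} (hF0 : F 0 = 0) (hG0 : G 0 = 0)
    (hd : ∀ r, 0 ≤ r → HasDerivAt F (G r) r) (r : ℝ) :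
    HasDerivAt (fun x => F (max x 0)) (G (max r 0)) r := by
  rcases lt_trichotomy r 0 with h | h | h
  · rw [max_eq_right h.le, hG0]
    refine (hasDerivAt_const r (0:ℝ)).congr_of_eventuallyEq ?_
    filter_upwards [Iio_mem_nhds h] with x hx
    rw [max_eq_right (le_of_lt hx), hF0]
  · subst h
    rw [max_self, hG0]
    have h1 : HasDerivWithinAt (fun x => F (max x 0)) 0 (Iic 0) 0 := by
      refine (hasDerivWithinAt_const (0:ℝ) _ (0:ℝ)).congr (fun x hx => ?_) ?_
      · rw [max_eq_right hx, hF0]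
      · simp [hF0]
    have h2 : HasDerivWithinAt (fun x => F (max x 0)) 0 (Ici 0) 0 := by
      have := (hd 0 le_rfl).hasDerivWithinAt (s := Ici 0)
      rw [hG0] at this
      refine this.congr (fun x hx => ?_) ?_
      · rw [max_eq_left hx]
      · simp
    have := h1.union h2
    rw [Iic_union_Ici] at this
    exact this.hasDerivAt Filter.univ_mem
  · rw [max_eq_left h.le]
    refine (hd r h.le).congr_of_eventuallyEq ?_
    filter_upwards [Ioi_mem_nhds h] with x hx
    rw [max_eq_left (le_of_lt hx)]

noncomputable def ch (δ r : ℝ) : ℝ := (max r 0) ^ 3 / (max r 0 + δ) ^ 2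
noncomputable def ch1 (δ r : ℝ) : ℝ := (max r 0) ^ 2 * (max r 0 + 3 * δ) / (max r 0 + δ) ^ 3
noncomputable def ch2 (δ r : ℝ) : ℝ := 6 * δ ^ 2 * (max r 0) / (max r 0 + δ) ^ 4

theorem ch_deriv {δ : ℝ} (hδ : 0 < δ) (r : ℝ) : HasDerivAt (ch δ) (ch1 δ r) r := by
  refine hasDeriv_maxcomp (F := fun x => x ^ 3 / (x + δ) ^ 2)
    (G := fun x => x ^ 2 * (x + 3 * δ) / (x + δ) ^ 3) (by simp) (by simp) (fun r hr => ?_) r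
  have hp : r + δ ≠ 0 := by positivity
  have h := (hasDerivAt_pow 3 r).div (((hasDerivAt_id r).add_const δ).pow 2)
    (by simp only [Pi.pow_apply, id]; positivity)
  refine h.congr_deriv ?_
  simp only [Pi.pow_apply, id]
  field_simp
  push_cast
  ring

theorem ch1_deriv {δ : ℝ} (hδ : 0 < δ) (r : ℝ) : HasDerivAt (ch1 δ) (ch2 δ r) r := by
  refine hasDeriv_maxcomp (F := fun x => x ^ 2 * (x + 3 * δ) / (x + δ) ^ 3)
    (G := fun x => 6 * δ ^ 2 * x / (x + δ) ^ 4) (by simp) (by simp) (fun r hr => ?_) r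
  have hp : r + δ ≠ 0 := by positivity
  have h := ((hasDerivAt_pow 2 r).mul ((hasDerivAt_id r).add_const (3 * δ))).div
    (((hasDerivAt_id r).add_const δ).pow 3)
    (by simp only [Pi.pow_apply, id]; positivity)
  refine h.congr_deriv ?_
  simp only [Pi.pow_apply, Pi.mul_apply, id]
  field_simp
  push_cast
  ring

theorem ch2_cont {δ : ℝ} (hδ : 0 < δ) : Continuous (ch2 δ) := by
  unfold ch2
  refine Continuous.div (by fun_prop) (by fun_prop) (fun r => ?_)
  have := le_max_right r 0
  positivity

theorem ch2_nonneg {δ : ℝ} (hδ : 0 < δ) (r : ℝ) : 0 ≤ ch2 δ r := by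
  have := le_max_right r 0
  unfold ch2; positivity

theorem ch_nonneg {δ : ℝ} (hδ : 0 < δ) (r : ℝ) : 0 ≤ ch δ r := by
  have := le_max_right r 0
  unfold ch; positivity

theorem ch_le {δ : ℝ} (hδ : 0 < δ) (r : ℝ) : ch δ r ≤ max r 0 := by
  have := le_max_right r 0
  unfold ch
  generalize max r 0 = x at *
  rw [div_le_iff₀ (by positivity)]
  have : x ^ 3 = x * x ^ 2 := by ring
  rw [this]
  gcongr
  linarith

theorem le_ch {δ : ℝ} (hδ : 0 < δ) (r : ℝ) : r - 2 * δ ≤ ch δ r := by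
  have := le_max_right r 0
  have h2 := le_max_left r 0
  unfold ch
  generalize max r 0 = x at *
  refine le_trans (sub_le_sub_right h2 _) ?_
  rw [le_div_iff₀ (by positivity)]
  have : 0 ≤ 3 * δ ^ 2 * x + 2 * δ ^ 3 := by positivity
  nlinarith

theorem ch_zero {δ r : ℝ} (hr : r ≤ 0) : ch δ r = 0 := by
  unfold ch; rw [max_eq_right hr]; simp
theorem ch1_zero {δ r : ℝ} (hr : r ≤ 0) : ch1 δ r = 0 := by
  unfold ch1; rw [max_eq_right hr]; simp
theorem ch2_zero {δ r : ℝ} (hr : r ≤ 0) : ch2 δ r = 0 := by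
  unfold ch2; rw [max_eq_right hr]; simp


open Classical in
/-- extension by zero off `D` -/
noncomputable def ez (D : Set (ℝ × ℝ)) (k : ℝ → ℝ → ℝ) (s θ : ℝ) : ℝ :=
  if (s, θ) ∈ D then k s θ else 0

theorem ez_in {D : Set (ℝ × ℝ)} {k : ℝ → ℝ → ℝ} {s θ : ℝ} (h : (s, θ) ∈ D) :
    ez D k s θ = k s θ := if_pos h

theorem ez_out {D : Set (ℝ × ℝ)} {k : ℝ → ℝ → ℝ} {s θ : ℝ} (h : (s, θ) ∉ D) :
    ez D k s θ = 0 := if_neg h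

theorem ez_ev_out {D : Set (ℝ × ℝ)} {k v : ℝ → ℝ → ℝ} {ε : ℝ} {q : ℝ × ℝ}
    (hk : ∀ s θ, v s θ < ε → k s θ = 0)
    (h : ∀ᶠ q' in nhds q, q' ∈ D → v q'.1 q'.2 < ε) :
    ∀ᶠ q' in nhds q, ez D k q'.1 q'.2 = 0 := by
  filter_upwards [h] with q' hq'
  by_cases hD : q' ∈ D
  · rw [ez_in hD, hk _ _ (hq' hD)]
  · rw [ez_out hD]

theorem ez_ev_in {D : Set (ℝ × ℝ)} (hD : IsOpen D) {k : ℝ → ℝ → ℝ} {q : ℝ × ℝ} (hq : q ∈ D) :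
    ∀ᶠ q' in nhds q, ez D k q'.1 q'.2 = k q'.1 q'.2 := by
  filter_upwards [hD.mem_nhds hq] with q' h
  exact ez_in h

theorem ez_cont {D : Set (ℝ × ℝ)} (hD : IsOpen D) {k v : ℝ → ℝ → ℝ} {ε t0 : ℝ}
    (hk : ∀ s θ, v s θ < ε → k s θ = 0)
    (h : ∀ q : ℝ × ℝ, t0 < q.1 → q ∉ D → ∀ᶠ q' in nhds q, q' ∈ D → v q'.1 q'.2 < ε)
    (hc : ContinuousOn (Function.uncurry k) D) :
    ContinuousOn (Function.uncurry (ez D k)) (Ioi t0 ×ˢ univ) := by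
  intro q hq
  apply ContinuousAt.continuousWithinAt
  by_cases hqD : q ∈ D
  · exact (hc.continuousAt (hD.mem_nhds hqD)).congr
      ((ez_ev_in hD (k := k) hqD).mono fun x hx => hx.symm)
  · exact (continuousAt_const (y := (0:ℝ))).congr
      ((ez_ev_out hk (h q hq.1 hqD)).mono fun x hx => hx.symm)

theorem ez_ds {D : Set (ℝ × ℝ)} (hD : IsOpen D) {k k' v : ℝ → ℝ → ℝ} {ε t0 : ℝ}
    (hk : ∀ s θ, v s θ < ε → k s θ = 0)
    (h : ∀ q : ℝ × ℝ, t0 < q.1 → q ∉ D → ∀ᶠ q' in nhds q, q' ∈ D → v q'.1 q'.2 < ε)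
    (hd : ∀ s θ, (s, θ) ∈ D → HasDerivAt (fun s => k s θ) (k' s θ) s)
    (s : ℝ) (hs : t0 < s) (θ : ℝ) : HasDerivAt (fun s => ez D k s θ) (ez D k' s θ) s := by
  have hc : Filter.Tendsto (fun x : ℝ => (x, θ)) (nhds s) (nhds (s, θ)) :=
    (Continuous.prodMk_left θ).tendsto s
  by_cases hqD : (s, θ) ∈ D
  · rw [ez_in hqD]
    exact (hd s θ hqD).congr_of_eventuallyEq (hc.eventually (ez_ev_in hD (k := k) hqD))
  · rw [ez_out hqD]
    exact (hasDerivAt_const s (0:ℝ)).congr_of_eventuallyEq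
      (hc.eventually (ez_ev_out hk (h _ hs hqD)))

theorem ez_dt {D : Set (ℝ × ℝ)} (hD : IsOpen D) {k k' v : ℝ → ℝ → ℝ} {ε t0 : ℝ}
    (hk : ∀ s θ, v s θ < ε → k s θ = 0)
    (h : ∀ q : ℝ × ℝ, t0 < q.1 → q ∉ D → ∀ᶠ q' in nhds q, q' ∈ D → v q'.1 q'.2 < ε)
    (hd : ∀ s θ, (s, θ) ∈ D → HasDerivAt (fun θ => k s θ) (k' s θ) θ)
    (s : ℝ) (hs : t0 < s) (θ : ℝ) : HasDerivAt (fun θ => ez D k s θ) (ez D k' s θ) θ := by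
  have hc : Filter.Tendsto (fun x : ℝ => (s, x)) (nhds θ) (nhds (s, θ)) :=
    (Continuous.prodMk_right s).tendsto θ
  by_cases hqD : (s, θ) ∈ D
  · rw [ez_in hqD]
    exact (hd s θ hqD).congr_of_eventuallyEq (hc.eventually (ez_ev_in hD (k := k) hqD))
  · rw [ez_out hqD]
    exact (hasDerivAt_const θ (0:ℝ)).congr_of_eventuallyEq
      (hc.eventually (ez_ev_out hk (h _ hs hqD)))

theorem Strip.ofHarm {t0 T R ε : ℝ} {a b : ℝ → ℝ} (hε : 0 < ε) (hε1 : ε < 1)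
    (ha : Continuous a) (hb : Continuous b) (hab : ∀ s, a s < b s)
    (haR : ∀ s, -R ≤ a s) (hbR : ∀ s, b s ≤ R)
    {D : Set (ℝ × ℝ)} (hDdef : ∀ s θ, (s, θ) ∈ D ↔ s < T ∧ a s < θ ∧ θ < b s)
    {v vs vt vss vtt : ℝ → ℝ → ℝ}
    (c0 : ContinuousOn (Function.uncurry v) D) (c1 : ContinuousOn (Function.uncurry vs) D)
    (c2 : ContinuousOn (Function.uncurry vt) D) (c3 : ContinuousOn (Function.uncurry vss) D)
    (c4 : ContinuousOn (Function.uncurry vtt) D)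
    (ds : ∀ s θ, (s, θ) ∈ D → HasDerivAt (fun s => v s θ) (vs s θ) s)
    (dss : ∀ s θ, (s, θ) ∈ D → HasDerivAt (fun s => vs s θ) (vss s θ) s)
    (dt : ∀ s θ, (s, θ) ∈ D → HasDerivAt (fun θ => v s θ) (vt s θ) θ)
    (dtt : ∀ s θ, (s, θ) ∈ D → HasDerivAt (fun θ => vt s θ) (vtt s θ) θ)
    (hlap : ∀ s θ, (s, θ) ∈ D → vss s θ + vtt s θ = 0)
    (hv1 : ∀ s θ, (s, θ) ∈ D → v s θ ≤ 1)
    (h : ∀ q : ℝ × ℝ, t0 < q.1 → q ∉ D → ∀ᶠ q' in nhds q, q' ∈ D → v q'.1 q'.2 < ε) :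
    Strip t0 T R (Real.pi / 2 * (1 - ε)) a b
      (ez D fun s θ => Real.pi / 2 * ch ε (v s θ - ε))
      (ez D fun s θ => Real.pi / 2 * (ch1 ε (v s θ - ε) * vs s θ))
      (ez D fun s θ => Real.pi / 2 * (ch1 ε (v s θ - ε) * vt s θ))
      (ez D fun s θ => Real.pi / 2 * (ch2 ε (v s θ - ε) * vs s θ * vs s θ
        + ch1 ε (v s θ - ε) * vss s θ))
      (ez D fun s θ => Real.pi / 2 * (ch2 ε (v s θ - ε) * vt s θ * vt s θ
        + ch1 ε (v s θ - ε) * vtt s θ)) := by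
  have hpi := Real.pi_pos
  have hD : IsOpen D := by
    have : D = {q : ℝ × ℝ | q.1 < T} ∩ ({q | a q.1 < q.2} ∩ {q | q.2 < b q.1}) := by
      ext ⟨s, θ⟩
      simpa using hDdef s θ
    rw [this]
    exact (isOpen_lt (by fun_prop) (by fun_prop)).inter
      ((isOpen_lt (by fun_prop) (by fun_prop)).inter (isOpen_lt (by fun_prop) (by fun_prop)))
  have k0 : ∀ s θ, v s θ < ε → ch ε (v s θ - ε) = 0 := fun s θ h => ch_zero (by linarith)
  have k1 : ∀ s θ, v s θ < ε → ch1 ε (v s θ - ε) = 0 := fun s θ h => ch1_zero (by linarith)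
  have k2 : ∀ s θ, v s θ < ε → ch2 ε (v s θ - ε) = 0 := fun s θ h => ch2_zero (by linarith)
  have cc0 : Continuous (ch ε) := continuous_iff_continuousAt.2 fun r => (ch_deriv hε r).continuousAt
  have cc1 : Continuous (ch1 ε) :=
    continuous_iff_continuousAt.2 fun r => (ch1_deriv hε r).continuousAt
  have cc2 := ch2_cont hε
  have cv : ContinuousOn (fun q : ℝ × ℝ => v q.1 q.2 - ε) D := ContinuousOn.sub c0 continuousOn_const
  have e0 := cc0.comp_continuousOn cv
  have e1 := cc1.comp_continuousOn cv
  have e2 := cc2.comp_continuousOn cv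
  refine ⟨ha, hb, hab, haR, hbR, by nlinarith, ?_, ?_, ?_, ?_, ?_, ?_, ?_, ?_, ?_, ?_, ?_, ?_, ?_, ?_⟩
  · intro s hs θ
    by_cases hq : (s, θ) ∈ D
    · rw [ez_in hq]; have := ch_nonneg hε (v s θ - ε); positivity
    · rw [ez_out hq]
  · intro s hs θ
    by_cases hq : (s, θ) ∈ D
    · rw [ez_in hq]
      have h1 := ch_le hε (v s θ - ε)
      have h2 : max (v s θ - ε) 0 ≤ 1 - ε := max_le (by linarith [hv1 s θ hq]) (by linarith)
      have := h1.trans h2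
      gcongr
    · rw [ez_out hq]
      have : 0 < 1 - ε := by linarith
      positivity
  · exact ez_cont hD (fun s θ h => by simp [k0 s θ h]) h (continuousOn_const.mul e0)
  · exact ez_cont hD (fun s θ h => by simp [k1 s θ h]) h (continuousOn_const.mul (e1.mul c1))
  · exact ez_cont hD (fun s θ h => by simp [k1 s θ h]) h (continuousOn_const.mul (e1.mul c2))
  · exact ez_cont hD (fun s θ h => by simp [k1 s θ h, k2 s θ h]) h
      (continuousOn_const.mul (((e2.mul c1).mul c1).add (e1.mul c3)))
  · exact ez_cont hD (fun s θ h => by simp [k1 s θ h, k2 s θ h]) h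
      (continuousOn_const.mul (((e2.mul c2).mul c2).add (e1.mul c4)))
  · refine ez_ds hD (fun s θ h => by simp [k0 s θ h]) h (fun s θ hq => ?_)
    exact (((ch_deriv hε _).comp s ((ds s θ hq).sub_const ε))).const_mul _
  · refine ez_ds hD (fun s θ h => by simp [k1 s θ h]) h (fun s θ hq => ?_)
    exact (((ch1_deriv hε _).comp s ((ds s θ hq).sub_const ε)).mul (dss s θ hq)).const_mul _
  · refine ez_dt hD (fun s θ h => by simp [k0 s θ h]) h (fun s θ hq => ?_)
    exact (((ch_deriv hε _).comp θ ((dt s θ hq).sub_const ε))).const_mul _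
  · refine ez_dt hD (fun s θ h => by simp [k1 s θ h]) h (fun s θ hq => ?_)
    exact (((ch1_deriv hε _).comp θ ((dt s θ hq).sub_const ε)).mul (dtt s θ hq)).const_mul _
  · intro s hs θ
    by_cases hq : (s, θ) ∈ D
    · rw [ez_in hq, ez_in hq]
      have h1 := ch2_nonneg hε (v s θ - ε)
      have h2 := hlap s θ hq
      have : vtt s θ = - vss s θ := by linarith
      rw [this]
      have : 0 ≤ Real.pi / 2 * ch2 ε (v s θ - ε) * (vs s θ ^ 2 + vt s θ ^ 2) := by positivity
      linarith
    · rw [ez_out hq, ez_out hq]; simp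
  · intro s hs θ hθ
    refine ez_ev_out (fun s θ h => by simp [k0 s θ h]) (h (s, θ) hs ?_)
    rw [hDdef]
    exact fun h => hθ h.2
  · intro s hs hT θ
    refine ez_out ?_
    rw [hDdef]
    exact fun h => absurd h.1 (not_lt.2 hT)


noncomputable def EE (s θ : ℝ) : ℂ := Complex.exp ((s : ℂ) + θ * Complex.I)

theorem EE_cont : Continuous (fun q : ℝ × ℝ => EE q.1 q.2) := by
  unfold EE; fun_prop

theorem EE_norm (s θ : ℝ) : ‖EE s θ‖ = Real.exp s := by
  unfold EE; rw [Complex.norm_exp]; simp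

theorem EE_eq (s θ : ℝ) : EE s θ = (Real.exp s : ℝ) * Complex.exp (θ * Complex.I) := by
  unfold EE; rw [Complex.exp_add, Complex.ofReal_exp]

theorem EE_ds (s θ : ℝ) : HasDerivAt (fun s => EE s θ) (EE s θ) s := by
  have h : HasDerivAt (fun s : ℝ => (s : ℂ) + θ * Complex.I) 1 s :=
    (Complex.ofRealCLM.hasDerivAt (x := s)).add_const _
  simpa [EE] using h.cexp

theorem EE_dt (s θ : ℝ) : HasDerivAt (fun θ => EE s θ) (EE s θ * Complex.I) θ := by
  have h : HasDerivAt (fun θ : ℝ => (s : ℂ) + θ * Complex.I) (1 * Complex.I) θ :=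
    ((Complex.ofRealCLM.hasDerivAt (x := θ)).mul_const Complex.I).const_add _
  simpa [EE] using h.cexp

theorem lap_rot (B : ℂ →L[ℝ] ℂ →L[ℝ] ℝ) (h : B 1 1 + B Complex.I Complex.I = 0) (e : ℂ) :
    B e e + B (e * Complex.I) (e * Complex.I) = 0 := by
  have h1 : e = e.re • (1:ℂ) + e.im • Complex.I := by
    apply Complex.ext <;> simp
  have h2 : e * Complex.I = (-e.im) • (1:ℂ) + e.re • Complex.I := by
    apply Complex.ext <;> simp
  generalize e.re = x at *
  generalize e.im = y at *
  rw [h2, h1]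
  simp only [map_add, map_smul, add_apply, smul_apply,
    smul_eq_mul]
  linear_combination (x ^ 2 + y ^ 2) * h

theorem clm_aux {U : ℂ → ℂ →L[ℝ] ℝ} {U' : ℂ →L[ℝ] ℂ →L[ℝ] ℝ} {c d : ℝ → ℂ} {c' d' : ℂ} {s : ℝ}
    (hU : HasFDerivAt U U' (c s)) (hc : HasDerivAt c c' s) (hd : HasDerivAt d d' s) :
    HasDerivAt (fun x => U (c x) (d x)) (U' c' (d s) + U (c s) d') s := by
  have h1 : HasDerivAt (fun x => U (c x)) (U' c') s := hU.comp_hasDerivAt s hc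
  exact h1.clm_apply hd

theorem pd_open {D : Set (ℝ × ℝ)} (hD : IsOpen D) {Ω : Set ℂ}
    (h : Ω = (fun q : ℝ × ℝ => EE q.1 q.2) '' D) : IsOpen Ω := by
  have : Ω = Complex.exp '' ((fun z : ℂ => (z.re, z.im)) ⁻¹' D) := by
    rw [h]; ext z; constructor
    · rintro ⟨⟨s, θ⟩, hq, rfl⟩
      exact ⟨(s : ℂ) + θ * Complex.I, by simpa using hq, rfl⟩
    · rintro ⟨w, hw, rfl⟩
      exact ⟨(w.re, w.im), hw, by simp [EE, Complex.re_add_im]⟩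
  rw [this]
  exact Complex.isOpenMap_exp _ (hD.preimage (by fun_prop))

theorem v_derivs {u : ℂ → ℝ} {Ω : Set ℂ} (hΩ : IsOpen Ω) (hu : HarmonicOnSet u Ω)
    {s θ : ℝ} (hq : EE s θ ∈ Ω) :
    HasDerivAt (fun s => u (EE s θ)) (fderiv ℝ u (EE s θ) (EE s θ)) s ∧
    HasDerivAt (fun s => fderiv ℝ u (EE s θ) (EE s θ))
      (fderiv ℝ (fderiv ℝ u) (EE s θ) (EE s θ) (EE s θ) + fderiv ℝ u (EE s θ) (EE s θ)) s ∧
    HasDerivAt (fun θ => u (EE s θ)) (fderiv ℝ u (EE s θ) (EE s θ * Complex.I)) θ ∧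
    HasDerivAt (fun θ => fderiv ℝ u (EE s θ) (EE s θ * Complex.I))
      (fderiv ℝ (fderiv ℝ u) (EE s θ) (EE s θ * Complex.I) (EE s θ * Complex.I)
        + fderiv ℝ u (EE s θ) (EE s θ * Complex.I * Complex.I)) θ ∧
    (fderiv ℝ (fderiv ℝ u) (EE s θ) (EE s θ) (EE s θ) + fderiv ℝ u (EE s θ) (EE s θ)) +
      (fderiv ℝ (fderiv ℝ u) (EE s θ) (EE s θ * Complex.I) (EE s θ * Complex.I)
        + fderiv ℝ u (EE s θ) (EE s θ * Complex.I * Complex.I)) = 0 := by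
  have h1 : HasFDerivAt u (fderiv ℝ u (EE s θ)) (EE s θ) :=
    ((hu.1.contDiffAt (hΩ.mem_nhds hq)).differentiableAt (by norm_num)).hasFDerivAt
  have hc : ContDiffOn ℝ 1 (fderiv ℝ u) Ω := hu.1.fderiv_of_isOpen hΩ (by norm_num)
  have h2 : HasFDerivAt (fderiv ℝ u) (fderiv ℝ (fderiv ℝ u) (EE s θ)) (EE s θ) :=
    ((hc.contDiffAt (hΩ.mem_nhds hq)).differentiableAt (by norm_num)).hasFDerivAt
  refine ⟨h1.comp_hasDerivAt s (EE_ds s θ), ?_, h1.comp_hasDerivAt θ (EE_dt s θ), ?_, ?_⟩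
  · exact clm_aux (c := fun s => EE s θ) (d := fun s => EE s θ) h2 (EE_ds s θ) (EE_ds s θ)
  · exact clm_aux (c := fun θ => EE s θ) (d := fun θ => EE s θ * Complex.I) h2 (EE_dt s θ)
      ((EE_dt s θ).mul_const Complex.I)
  · have h3 := hu.2 _ hq
    rw [iteratedFDeriv_two_apply, iteratedFDeriv_two_apply] at h3
    have h4 := lap_rot (fderiv ℝ (fderiv ℝ u) (EE s θ)) (by simpa using h3) (EE s θ)
    have h5 : EE s θ * Complex.I * Complex.I = - EE s θ := by
      rw [mul_assoc, Complex.I_mul_I]; ring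
    rw [h5, map_neg]
    linarith

theorem v_conts {u : ℂ → ℝ} {Ω : Set ℂ} (hΩ : IsOpen Ω) (hu : HarmonicOnSet u Ω)
    {D : Set (ℝ × ℝ)} (hD : MapsTo (fun q : ℝ × ℝ => EE q.1 q.2) D Ω) :
    ContinuousOn (fun q : ℝ × ℝ => u (EE q.1 q.2)) D ∧
    ContinuousOn (fun q : ℝ × ℝ => fderiv ℝ u (EE q.1 q.2)) D ∧
    ContinuousOn (fun q : ℝ × ℝ => fderiv ℝ (fderiv ℝ u) (EE q.1 q.2)) D := by
  have hc : ContDiffOn ℝ 1 (fderiv ℝ u) Ω := hu.1.fderiv_of_isOpen hΩ (by norm_num)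
  have e := EE_cont.continuousOn (s := D)
  exact ⟨hu.1.continuousOn.comp e hD, hc.continuousOn.comp e hD,
    (hc.continuousOn_fderiv_of_isOpen hΩ le_rfl).comp e hD⟩

theorem EE_inj {s r θ θ' α β : ℝ} (hr : 0 < r) (hab : β - α ≤ 2 * Real.pi)
    (hθ : θ ∈ Icc α β) (hθ' : θ' ∈ Ioo α β)
    (h : EE s θ = (r : ℂ) * Complex.exp (θ' * Complex.I)) : θ = θ' := by
  have h0 : Real.exp s = r := by
    have := congrArg norm h
    rw [EE_norm, norm_mul, Complex.norm_exp_ofReal_mul_I, Complex.norm_of_nonneg hr.le] at this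
    linarith
  rw [EE_eq, h0] at h
  have h1 := mul_left_cancel₀ (by exact_mod_cast hr.ne') h
  rw [Complex.exp_eq_exp_iff_exists_int] at h1
  obtain ⟨n, hn⟩ := h1
  have h2 : θ = θ' + n * (2 * Real.pi) := by
    have := congrArg Complex.im hn
    simpa using this
  have hpi := Real.pi_pos
  have h3 : (n : ℝ) < 1 := by
    by_contra hc
    push Not at hc
    have : 1 * (2 * Real.pi) ≤ n * (2 * Real.pi) := by gcongr
    linarith [hθ.2, hθ'.1]
  have h4 : (-1 : ℝ) < n := by
    by_contra hc
    push Not at hc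
    have : n * (2 * Real.pi) ≤ (-1) * (2 * Real.pi) := by gcongr
    linarith [hθ.1, hθ'.2]
  have h5 : n < 1 := by exact_mod_cast h3
  have h6 : -1 < n := by exact_mod_cast h4
  have h7 : n = 0 := by omega
  rw [h7] at h2; simpa using h2



theorem strip_bound {ρ₀ r₀ : ℝ} (hρ₀ : 0 < ρ₀) (hr₀ : 0 < r₀)
    {φp φm : ℝ → ℝ}
    (hφpc : ContinuousOn φp (Icc 0 ρ₀)) (hφmc : ContinuousOn φm (Icc 0 ρ₀))
    (hΘpos : ∀ r ∈ Ioc (0:ℝ) ρ₀, 0 < φm r - φp r)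
    (hΘle : ∀ r ∈ Ioc (0:ℝ) ρ₀, φm r - φp r ≤ 2 * Real.pi)
    {u : ℂ → ℝ} (hu : HarmonicOnSet u (polarDomain ρ₀ φp φm))
    (hub : ∀ z ∈ polarDomain ρ₀ φp φm, u z ≤ 1)
    (hbd : ∀ ζ ∈ frontier (polarDomain ρ₀ φp φm), r₀ < ‖ζ‖ →
      Filter.limsup u (nhdsWithin ζ (polarDomain ρ₀ φp φm)) ≤ 0)
    {ε : ℝ} (hε : 0 < ε) (hε1 : ε < 1) {t θ₀ : ℝ} (htT : t < Real.log ρ₀)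
    (h1 : φp (Real.exp t) < θ₀) (h2 : θ₀ < φm (Real.exp t))
    {s : ℝ} (hs : Real.log r₀ < s) (hst : s ≤ t) {Lam : ℝ → ℝ}
    (hLam : ∀ r ∈ Icc s t, HasDerivAt Lam
      (1 / (φm (min (Real.exp r) ρ₀) - φp (min (Real.exp r) ρ₀))) r) :
    Real.pi / 2 * ch ε (u (EE t θ₀) - ε) ≤ 4 * Real.exp (-Real.pi * (Lam t - Lam s)) := by
  set Ω := polarDomain ρ₀ φp φm with hΩdef
  set T := Real.log ρ₀ with hT
  set t0 := Real.log r₀ with ht0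
  have hmin : ∀ s, min (Real.exp s) ρ₀ ∈ Ioc (0:ℝ) ρ₀ := fun s =>
    ⟨lt_min (Real.exp_pos s) hρ₀, min_le_right _ _⟩
  have hmin' : ∀ s, min (Real.exp s) ρ₀ ∈ Icc (0:ℝ) ρ₀ := fun s => ⟨(hmin s).1.le, (hmin s).2⟩
  have hexp : ∀ {s}, s < T → Real.exp s < ρ₀ := fun {s} h => by
    rw [hT, Real.lt_log_iff_exp_lt hρ₀] at h; exact h
  obtain ⟨a, ha⟩ : ∃ a : ℝ → ℝ, a = fun s => φp (min (Real.exp s) ρ₀) := ⟨_, rfl⟩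
  obtain ⟨b, hb⟩ : ∃ b : ℝ → ℝ, b = fun s => φm (min (Real.exp s) ρ₀) := ⟨_, rfl⟩
  have ha1 : ∀ {s}, s < T → a s = φp (Real.exp s) := fun {s} h => by
    rw [ha]; simp only; rw [min_eq_left (hexp h).le]
  have hb1 : ∀ {s}, s < T → b s = φm (Real.exp s) := fun {s} h => by
    rw [hb]; simp only; rw [min_eq_left (hexp h).le]
  have hac : Continuous a := by
    rw [ha]; exact hφpc.comp_continuous (by fun_prop) hmin'
  have hbc : Continuous b := by
    rw [hb]; exact hφmc.comp_continuous (by fun_prop) hmin'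
  have hab : ∀ s, a s < b s := fun s => by
    have := hΘpos _ (hmin s); rw [ha, hb]; simp only; linarith
  have hab2 : ∀ s, b s - a s ≤ 2 * Real.pi := fun s => by
    have := hΘle _ (hmin s); rw [ha, hb]; simp only; linarith
  obtain ⟨R1, hR1⟩ := isCompact_Icc.exists_bound_of_continuousOn hφpc
  obtain ⟨R2, hR2⟩ := isCompact_Icc.exists_bound_of_continuousOn hφmc
  have haR : ∀ s, -(max R1 R2) ≤ a s := fun s => by
    have h := hR1 _ (hmin' s)
    rw [Real.norm_eq_abs, abs_le] at h
    rw [ha]; simp only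
    linarith [h.1, le_max_left R1 R2]
  have hbR : ∀ s, b s ≤ max R1 R2 := fun s => by
    have h := hR2 _ (hmin' s)
    rw [Real.norm_eq_abs, abs_le] at h
    rw [hb]; simp only
    linarith [h.2, le_max_right R1 R2]
  obtain ⟨D, hDe⟩ : ∃ D : Set (ℝ × ℝ), D = {q : ℝ × ℝ | q.1 < T ∧ a q.1 < q.2 ∧ q.2 < b q.1} :=
    ⟨_, rfl⟩
  have hDdef : ∀ s θ, (s, θ) ∈ D ↔ s < T ∧ a s < θ ∧ θ < b s := fun s θ => by rw [hDe]; rfl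
  have hDo : IsOpen D := by
    rw [hDe]
    have o1 : IsOpen {q : ℝ × ℝ | q.1 < T} := isOpen_lt (by fun_prop) (by fun_prop)
    have o2 : IsOpen {q : ℝ × ℝ | a q.1 < q.2} := isOpen_lt (by fun_prop) (by fun_prop)
    have o3 : IsOpen {q : ℝ × ℝ | q.2 < b q.1} := isOpen_lt (by fun_prop) (by fun_prop)
    exact o1.inter (o2.inter o3)
  have hmaps : MapsTo (fun q : ℝ × ℝ => EE q.1 q.2) D Ω := by
    rintro ⟨s, θ⟩ hq
    rw [hDdef] at hq
    obtain ⟨q1, q2, q3⟩ := hq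
    rw [ha1 q1] at q2
    rw [hb1 q1] at q3
    exact ⟨Real.exp s, θ, Real.exp_pos s, hexp q1, q2, q3, EE_eq s θ⟩
  have himg : Ω = (fun q : ℝ × ℝ => EE q.1 q.2) '' D := by
    refine Subset.antisymm ?_ hmaps.image_subset
    rintro z ⟨r, θ, hr, hrρ, hθ1, hθ2, rfl⟩
    have hlT : Real.log r < T := Real.log_lt_log hr hrρ
    refine ⟨(Real.log r, θ), ?_, ?_⟩
    · rw [hDdef, ha1 hlT, hb1 hlT, Real.exp_log hr]
      exact ⟨hlT, hθ1, hθ2⟩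
    · simp only [EE_eq, Real.exp_log hr]
  have hΩ : IsOpen Ω := pd_open hDo himg
  have hvan : ∀ q : ℝ × ℝ, t0 < q.1 → q ∉ D →
      ∀ᶠ q' in nhds q, q' ∈ D → u (EE q'.1 q'.2) < ε := by
    rintro ⟨s, θ⟩ hs hq
    by_cases hcl : (s, θ) ∈ closure D
    · have hcl2 : (s, θ) ∈ {q : ℝ × ℝ | q.1 ≤ T ∧ a q.1 ≤ q.2 ∧ q.2 ≤ b q.1} := by
        refine closure_minimal ?_ ?_ hcl
        · rw [hDe]
          exact fun q hq => ⟨hq.1.le, hq.2.1.le, hq.2.2.le⟩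
        · have o1 : IsClosed {q : ℝ × ℝ | q.1 ≤ T} := isClosed_le (by fun_prop) (by fun_prop)
          have o2 : IsClosed {q : ℝ × ℝ | a q.1 ≤ q.2} := isClosed_le (by fun_prop) (by fun_prop)
          have o3 : IsClosed {q : ℝ × ℝ | q.2 ≤ b q.1} := isClosed_le (by fun_prop) (by fun_prop)
          exact o1.inter (o2.inter o3)
      have hnot : EE s θ ∉ Ω := by
        rintro ⟨r, θ', hr, hrρ, hθ1, hθ2, he⟩
        have hrs : Real.exp s = r := by
          have := congrArg norm he
          rw [EE_norm, norm_mul, Complex.norm_exp_ofReal_mul_I,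
            Complex.norm_of_nonneg hr.le] at this
          linarith
        have hsT : s < T := by rw [hT, Real.lt_log_iff_exp_lt hρ₀, hrs]; exact hrρ
        rw [← hrs, ← ha1 hsT] at hθ1
        rw [← hrs, ← hb1 hsT] at hθ2
        have : θ = θ' := EE_inj hr (hab2 s) ⟨hcl2.2.1, hcl2.2.2⟩ ⟨hθ1, hθ2⟩ he
        apply hq
        rw [hDdef, this]
        exact ⟨hsT, hθ1, hθ2⟩
      have hfr : EE s θ ∈ frontier Ω := by
        rw [frontier, hΩ.interior_eq]
        exact ⟨map_mem_closure (f := fun q : ℝ × ℝ => EE q.1 q.2) EE_cont hcl hmaps, hnot⟩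
      have hn : r₀ < ‖EE s θ‖ := by
        rw [EE_norm]
        exact (Real.log_lt_iff_lt_exp hr₀).1 hs
      have hlim := hbd _ hfr hn
      have hev := Filter.eventually_lt_of_limsup_lt (lt_of_le_of_lt hlim hε)
        (Filter.isBoundedUnder_of_eventually_le (a := 1)
          (by filter_upwards [self_mem_nhdsWithin] with z hz using hub z hz))
      rw [eventually_nhdsWithin_iff] at hev
      have hcont : Filter.Tendsto (fun q : ℝ × ℝ => EE q.1 q.2) (nhds (s, θ)) (nhds (EE s θ)) :=
        EE_cont.tendsto (s, θ)
      filter_upwards [hcont.eventually hev] with q' hq' hD'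
      exact hq' (hmaps hD')
    · have : (closure D)ᶜ ∈ nhds (s, θ) := isClosed_closure.isOpen_compl.mem_nhds hcl
      filter_upwards [this] with q' hq' hD'
      exact absurd (subset_closure hD') hq'
  obtain ⟨c0, c1, c2⟩ := v_conts hΩ hu hmaps
  have cE : ContinuousOn (fun q : ℝ × ℝ => EE q.1 q.2) D := EE_cont.continuousOn
  have cEI : ContinuousOn (fun q : ℝ × ℝ => EE q.1 q.2 * Complex.I) D := cE.mul continuousOn_const
  have cEII : ContinuousOn (fun q : ℝ × ℝ => EE q.1 q.2 * Complex.I * Complex.I) D :=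
    cEI.mul continuousOn_const
  have S := Strip.ofHarm (t0 := t0) (T := T) (R := max R1 R2) hε hε1 hac hbc hab haR hbR hDdef
    (v := fun s θ => u (EE s θ))
    (vs := fun s θ => fderiv ℝ u (EE s θ) (EE s θ))
    (vt := fun s θ => fderiv ℝ u (EE s θ) (EE s θ * Complex.I))
    (vss := fun s θ => fderiv ℝ (fderiv ℝ u) (EE s θ) (EE s θ) (EE s θ)
      + fderiv ℝ u (EE s θ) (EE s θ))
    (vtt := fun s θ => fderiv ℝ (fderiv ℝ u) (EE s θ) (EE s θ * Complex.I) (EE s θ * Complex.I)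
        + fderiv ℝ u (EE s θ) (EE s θ * Complex.I * Complex.I))
    c0 (c1.clm_apply cE) (c1.clm_apply cEI)
    (((c2.clm_apply cE).clm_apply cE).add (c1.clm_apply cE))
    (((c2.clm_apply cEI).clm_apply cEI).add (c1.clm_apply cEII))
    (fun s θ hq => (v_derivs hΩ hu (hmaps hq)).1)
    (fun s θ hq => (v_derivs hΩ hu (hmaps hq)).2.1)
    (fun s θ hq => (v_derivs hΩ hu (hmaps hq)).2.2.1)
    (fun s θ hq => (v_derivs hΩ hu (hmaps hq)).2.2.2.1)
    (fun s θ hq => (v_derivs hΩ hu (hmaps hq)).2.2.2.2)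
    (fun s θ hq => hub _ (hmaps hq)) hvan
  have hfin := S.concl hs hst θ₀ (Lam := Lam) (by rw [ha, hb]; exact hLam)
  rwa [ez_in] at hfin
  rw [hDdef, ha1 htT, hb1 htT]
  exact ⟨htT, h1, h2⟩


/-- the Carleman-type extremal-length estimate: on the polar domain `Ω`
with angular width `Θ(r) = φ₋(r) − φ₊(r) ∈ (0, 2π]`, any harmonic `u ≤ 1` whose
boundary limsup is `≤ 0` on `∂Ω ∩ {|ζ| > r₀}` satisfies
`u z ≤ (8/π) exp(−π ∫_{r₀}^{|z|} ds/(s Θ(s)))` for `z ∈ Ω` with `|z| > r₀`. -/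
theorem stmt_5 (ρ₀ r₀ : ℝ) (hρ₀ : 0 < ρ₀) (hr₀ : 0 < r₀) (hr : r₀ < ρ₀)
    (φp φm : ℝ → ℝ)
    (hφpc : ContinuousOn φp (Icc 0 ρ₀)) (hφmc : ContinuousOn φm (Icc 0 ρ₀))
    (hΘpos : ∀ r ∈ Ioc (0:ℝ) ρ₀, 0 < φm r - φp r)
    (hΘle : ∀ r ∈ Ioc (0:ℝ) ρ₀, φm r - φp r ≤ 2 * Real.pi)
    (u : ℂ → ℝ) (hu : HarmonicOnSet u (polarDomain ρ₀ φp φm))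
    (hub : ∀ z ∈ polarDomain ρ₀ φp φm, u z ≤ 1)
    (hbd : ∀ ζ ∈ frontier (polarDomain ρ₀ φp φm), r₀ < ‖ζ‖ →
      Filter.limsup u (nhdsWithin ζ (polarDomain ρ₀ φp φm)) ≤ 0) :
    ∀ z ∈ polarDomain ρ₀ φp φm, r₀ < ‖z‖ →
      u z ≤ (8 / Real.pi) *
        Real.exp (-Real.pi * ∫ s in r₀..‖z‖, 1 / (s * (φm s - φp s))) := by
  rintro z hz hzr
  have hz0 := hz
  obtain ⟨r, θ, hr0, hrρ, hθ1, hθ2, rfl⟩ := hz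
  have hnorm : ‖(r : ℂ) * Complex.exp (θ * Complex.I)‖ = r := by
    rw [norm_mul, Complex.norm_exp_ofReal_mul_I, Complex.norm_of_nonneg hr0.le, mul_one]
  rw [hnorm] at hzr ⊢
  have hpi := Real.pi_pos
  set t := Real.log r with ht
  set t0 := Real.log r₀ with ht0
  have hexpt : Real.exp t = r := Real.exp_log hr0
  have hexpt0 : Real.exp t0 = r₀ := Real.exp_log hr₀
  have ht0t : t0 < t := Real.log_lt_log hr₀ hzr
  have htT : t < Real.log ρ₀ := Real.log_lt_log hr0 hrρ
  have hz' : (r : ℂ) * Complex.exp (θ * Complex.I) = EE t θ := by rw [EE_eq, hexpt]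
  rw [hz']
  have hmin : ∀ s, min (Real.exp s) ρ₀ ∈ Ioc (0:ℝ) ρ₀ := fun s =>
    ⟨lt_min (Real.exp_pos s) hρ₀, min_le_right _ _⟩
  have hmin' : ∀ s, min (Real.exp s) ρ₀ ∈ Icc (0:ℝ) ρ₀ := fun s => ⟨(hmin s).1.le, (hmin s).2⟩
  obtain ⟨g, hg⟩ : ∃ g : ℝ → ℝ,
    g = fun s => 1 / (φm (min (Real.exp s) ρ₀) - φp (min (Real.exp s) ρ₀)) := ⟨_, rfl⟩
  have hgc : Continuous g := by
    rw [hg]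
    exact Continuous.div continuous_const
      ((hφmc.comp_continuous (by fun_prop) hmin').sub (hφpc.comp_continuous (by fun_prop) hmin'))
      (fun s => (hΘpos _ (hmin s)).ne')
  obtain ⟨Lam, hLamd⟩ : ∃ Lam : ℝ → ℝ, Lam = fun s => ∫ x in t0..s, g x := ⟨_, rfl⟩
  have hLam : ∀ s, HasDerivAt Lam (g s) s := fun s => by
    rw [hLamd]
    exact intervalIntegral.integral_hasDerivAt_right (hgc.intervalIntegrable _ _)
      (hgc.stronglyMeasurableAtFilter _ _) hgc.continuousAt
  have hLam0 : Lam t0 = 0 := by rw [hLamd]; simp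
  have hint : ∫ s in r₀..r, 1 / (s * (φm s - φp s)) = Lam t := by
    have hsub : Real.exp '' uIcc t0 t ⊆ Ioc 0 ρ₀ := by
      rintro _ ⟨x, hx, rfl⟩
      rw [uIcc_of_le ht0t.le] at hx
      refine ⟨Real.exp_pos x, ?_⟩
      have := Real.exp_le_exp.2 hx.2
      rw [hexpt] at this
      linarith
    have hsub' : Ioc (0:ℝ) ρ₀ ⊆ Icc 0 ρ₀ := Ioc_subset_Icc_self
    have hcv := intervalIntegral.integral_comp_mul_deriv'' (a := t0) (b := t) (f := Real.exp)
      (f' := Real.exp) (g := fun s => 1 / (s * (φm s - φp s)))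
      Real.continuous_exp.continuousOn (fun x _ => (Real.hasDerivAt_exp x).hasDerivWithinAt)
      Real.continuous_exp.continuousOn
      (ContinuousOn.div continuousOn_const (continuousOn_id.mul
        ((hφmc.mono (hsub.trans hsub')).sub (hφpc.mono (hsub.trans hsub'))))
        (fun x hx => (mul_pos (hsub hx).1 (hΘpos x (hsub hx))).ne'))
    rw [hexpt, hexpt0] at hcv
    rw [← hcv, hLamd]
    refine intervalIntegral.integral_congr (fun x hx => ?_)
    have hxI := hsub (mem_image_of_mem _ hx)
    have hpos := hΘpos _ hxI
    have he := Real.exp_pos x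
    simp only [Function.comp, hg, min_eq_left hxI.2]
    field_simp
  rw [hint]
  have key : ∀ ε : ℝ, 0 < ε → ε < 1 →
      u (EE t θ) ≤ (8 / Real.pi) * Real.exp (-Real.pi * Lam t) + 3 * ε := by
    intro ε hε hε1
    have h1 : ∀ s ∈ Ioc t0 t,
        Real.pi / 2 * ch ε (u (EE t θ) - ε) ≤ 4 * Real.exp (-Real.pi * (Lam t - Lam s)) := by
      intro s hs
      refine strip_bound hρ₀ hr₀ hφpc hφmc hΘpos hΘle hu hub hbd hε hε1 htT
        (by rw [hexpt]; exact hθ1) (by rw [hexpt]; exact hθ2) hs.1 hs.2 (fun x _ => ?_)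
      have := hLam x
      rw [hg] at this
      exact this
    have hcont : ContinuousAt (fun s => 4 * Real.exp (-Real.pi * (Lam t - Lam s))) t0 := by
      have := (hLam t0).continuousAt
      fun_prop
    have h2 := ge_of_tendsto (b := Real.pi / 2 * ch ε (u (EE t θ) - ε))
      (hcont.tendsto.mono_left (nhdsWithin_le_nhds (s := Ioi t0)))
      (by filter_upwards [Ioc_mem_nhdsGT ht0t] with s hs using h1 s hs)
    simp only [hLam0, sub_zero] at h2
    have h3 := le_ch hε (u (EE t θ) - ε)
    have h4 : ch ε (u (EE t θ) - ε) ≤ (8 / Real.pi) * Real.exp (-Real.pi * Lam t) := by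
      have : ch ε (u (EE t θ) - ε) = (2 / Real.pi) * (Real.pi / 2 * ch ε (u (EE t θ) - ε)) := by
        field_simp
      rw [this]
      calc _ ≤ (2 / Real.pi) * (4 * Real.exp (-Real.pi * Lam t)) := by gcongr
        _ = _ := by ring
    linarith
  refine le_of_forall_pos_le_add (fun η hη => ?_)
  have := key (min (η / 3) (1 / 2)) (by positivity) (by
    have := min_le_right (η / 3) (1 / 2 : ℝ); linarith)
  have h5 := min_le_left (η / 3) (1 / 2 : ℝ)
  linarith
end
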